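/- Let A, C, σ, Ra be strictly positive real parameters. Let f₁, …, f_p ∈ ℝ[x,y,z] be nonzero polynomials, λ₁, …, λ_p real numbers, g, h ∈ ℝ[x,y,z] coprime polynomials with h ≠ 0, and let U ⊆ ℝ³ be the open set where all f_i and h are nonvanishing. Define Φ : U → ℝ by Φ(p) = ∏ᵢ |fᵢ(p)|^{λᵢ} · exp(g(p)/h(p)). If Φ is a first integral of the Glukhovsky–Dolzhansky system, i.e., the directional derivative of Φ along the vector field (A y z + C z − σ x, −x z + Ra − y, −z + x y) vanishes at every point of U, then Φ is locally constant on U. In other words, the system admits no nonconstant Darboux first integral. -/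

import Mathlib

section
open MvPolynomial

/-- The derivation associated with the Glukhovsky–Dolzhansky system
`ẋ = A y z + C z − σ x, ẏ = −x z + Ra − y, ż = −z + x y`,
acting on `ℝ[x,y,z]` (variables `X 0 = x`, `X 1 = y`, `X 2 = z`). -/
noncomputable def gdDeriv (A C σ Ra : ℝ) (f : MvPolynomial (Fin 3) ℝ) :
    MvPolynomial (Fin 3) ℝ :=
  (MvPolynomial.C A * X 1 * X 2 + MvPolynomial.C C * X 2 - MvPolynomial.C σ * X 0) *
      pderiv (0 : Fin 3) f
    + (-(X 0 * X 2) + MvPolynomial.C Ra - X 1) * pderiv (1 : Fin 3) f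
    + (-X 2 + X 0 * X 1) * pderiv (2 : Fin 3) f
end

open Polynomial in
theorem gdp_poly_unit {K : Type*} [Field K] [CharZero K] (R q num den : K[X])
    (hsq : Squarefree R) (hcop : IsCoprime num den) (hden : den ≠ 0)
    (heq : derivative R * num * den + 2 * R * (derivative num * den - num * derivative den)
      = q * den ^ 2) : IsUnit den := by
  by_contra hu
  obtain ⟨π, hπ, hdvd⟩ := WfDvdMonoid.exists_irreducible_factor hu hden
  have hp : Prime π := hπ.prime
  obtain ⟨e, he, hek⟩ := (FiniteMultiplicity.of_prime_left hp hden).exists_eq_pow_mul_and_not_dvd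
  have hk0 : multiplicity π den ≠ 0 := by
    intro h0
    rw [h0, pow_zero, one_mul] at he
    exact hek (he ▸ hdvd)
  obtain ⟨j, hj⟩ := Nat.exists_eq_succ_of_ne_zero hk0
  rw [hj] at he
  have hnum : ¬ π ∣ num := fun h => hπ.not_isUnit (hcop.isUnit_of_dvd' h hdvd)
  have hder : ¬ π ∣ derivative π := by
    intro h
    have hsep := hπ.separable
    exact hπ.not_isUnit (hsep.isUnit_of_dvd' dvd_rfl h)
  have hnat : ∀ c : K, c ≠ 0 → ¬ π ∣ C c := fun c hc h =>
    hπ.not_isUnit (isUnit_of_dvd_unit h (isUnit_C.2 (isUnit_iff_ne_zero.2 hc)))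
  have hπ0 : π ≠ 0 := hπ.ne_zero
  have hden' : derivative den = π ^ j * (C ((j : K) + 1) * derivative π * e + π * derivative e) := by
    rw [he, derivative_mul, derivative_pow]
    simp only [Nat.succ_eq_add_one, Nat.add_sub_cancel, Nat.cast_add, Nat.cast_one, map_add, map_one,
      map_natCast]
    ring
  have h1 : derivative R * num * π * e + 2 * R * derivative num * π * e
      - 2 * R * num * (C ((j : K) + 1) * derivative π * e + π * derivative e)
      = q * π ^ (j + 2) * e ^ 2 := by
    apply mul_left_cancel₀ (pow_ne_zero j hπ0)
    rw [hden', he] at heq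
    simp only [Nat.succ_eq_add_one] at heq
    linear_combination heq
  have hC : (C (2 * ((j : K) + 1)) : K[X]) = 2 * C ((j : K) + 1) := by
    rw [C_mul]; rfl
  have h2 : π ∣ C (2 * ((j : K) + 1)) * R * num * derivative π * e := by
    refine ⟨derivative R * num * e + 2 * R * derivative num * e
      - 2 * R * num * derivative e - q * π ^ (j + 1) * e ^ 2, ?_⟩
    rw [hC]
    linear_combination -h1
  have hc2 : (2 * ((j : K) + 1)) ≠ 0 := by
    have : ((j : K) + 1) ≠ 0 := by exact_mod_cast Nat.succ_ne_zero j
    simpa using this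
  have hR : π ∣ R := by
    rcases hp.dvd_or_dvd h2 with h | h
    · rcases hp.dvd_or_dvd h with h | h
      · rcases hp.dvd_or_dvd h with h | h
        · rcases hp.dvd_or_dvd h with h | h
          · exact absurd h (hnat _ hc2)
          · exact h
        · exact absurd h hnum
      · exact absurd h hder
    · exact absurd h hek
  obtain ⟨R1, rfl⟩ := hR
  have hR1 : ¬ π ∣ R1 := by
    intro h
    exact hπ.not_isUnit (hsq π (mul_dvd_mul_left π h))
  have h3 : (derivative π * R1 + π * derivative R1) * num * e + 2 * R1 * derivative num * π * e
      - 2 * R1 * num * (C ((j : K) + 1) * derivative π * e + π * derivative e)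
      = q * π ^ (j + 1) * e ^ 2 := by
    apply mul_left_cancel₀ hπ0
    rw [derivative_mul] at h1
    linear_combination h1
  have hC' : (C (1 - 2 * ((j : K) + 1)) : K[X]) = 1 - 2 * C ((j : K) + 1) := by
    rw [C_sub, hC]; rfl
  have h4 : π ∣ C (1 - 2 * ((j : K) + 1)) * R1 * num * derivative π * e := by
    refine ⟨q * π ^ j * e ^ 2 - derivative R1 * num * e - 2 * R1 * derivative num * e
      + 2 * R1 * num * derivative e, ?_⟩
    rw [hC']
    linear_combination h3
  have hc3 : (1 - 2 * ((j : K) + 1)) ≠ 0 := by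
    have : ((2 * j + 1 : ℕ) : K) ≠ 0 := by exact_mod_cast Nat.succ_ne_zero (2 * j)
    intro h
    apply this
    push_cast
    linear_combination -h
  rcases hp.dvd_or_dvd h4 with h | h
  · rcases hp.dvd_or_dvd h with h | h
    · rcases hp.dvd_or_dvd h with h | h
      · rcases hp.dvd_or_dvd h with h | h
        · exact absurd h (hnat _ hc3)
        · exact absurd h hR1
      · exact absurd h hnum
    · exact absurd h hder
  · exact absurd h hek

open Polynomial in
theorem gdp_poly_core {K : Type*} [Field K] [CharZero K] (R q num den : K[X])
    (hsq : Squarefree R) (hcop : IsCoprime num den) (hden : den ≠ 0)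
    (heq : derivative R * num * den + 2 * R * (derivative num * den - num * derivative den)
      = q * den ^ 2) (hR : 1 ≤ R.natDegree) (hq : q = 0 ∨ q.natDegree + 1 < R.natDegree) :
    num = 0 := by
  have hu := gdp_poly_unit R q num den hsq hcop hden heq
  obtain ⟨c, hc, rfl⟩ := Polynomial.isUnit_iff.1 hu
  by_contra hn
  have hc0 : c ≠ 0 := hc.ne_zero
  have h1 : derivative R * num + 2 * R * derivative num = q * C c := by
    apply mul_left_cancel₀ (C_ne_zero.2 hc0)
    simp only [derivative_C] at heq
    linear_combination heq
  have h2 : (q * C c).coeff (R.natDegree - 1 + num.natDegree) = 0 := by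
    rw [coeff_mul_C]
    rcases hq with rfl | hq
    · simp
    · rw [coeff_eq_zero_of_natDegree_lt (by omega), zero_mul]
  rw [← h1, coeff_add, coeff_mul_add_eq_of_natDegree_le (natDegree_derivative_le R) le_rfl,
    coeff_derivative] at h2
  have hRn : R.natDegree - 1 + 1 = R.natDegree := by omega
  rw [hRn] at h2
  have h3 : (2 * R * derivative num).coeff (R.natDegree - 1 + num.natDegree)
      = 2 * num.natDegree * (R.leadingCoeff * num.leadingCoeff) := by
    by_cases hm : num.natDegree = 0
    · rw [derivative_of_natDegree_zero hm, hm]; simp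
    · have : R.natDegree - 1 + num.natDegree = R.natDegree + (num.natDegree - 1) := by omega
      have h22 : (2 : K[X]) = C 2 := rfl
      rw [this, mul_assoc, h22, coeff_C_mul,
        coeff_mul_add_eq_of_natDegree_le le_rfl (natDegree_derivative_le num), coeff_derivative]
      have hm1 : num.natDegree - 1 + 1 = num.natDegree := by omega
      have hm2 : ((num.natDegree - 1 : ℕ) : K) + 1 = num.natDegree := by exact_mod_cast hm1
      rw [hm1, hm2, leadingCoeff, leadingCoeff]; ring
  have hR2 : ((R.natDegree - 1 : ℕ) : K) + 1 = R.natDegree := by exact_mod_cast hRn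
  rw [h3, hR2] at h2
  have hRne : R ≠ 0 := by rintro rfl; simp at hR
  have h4 : ((R.natDegree + 2 * num.natDegree : ℕ) : K) * (R.leadingCoeff * num.leadingCoeff) = 0 := by
    push_cast
    rw [leadingCoeff, leadingCoeff] at *
    linear_combination h2
  have h5 : ((R.natDegree + 2 * num.natDegree : ℕ) : K) ≠ 0 := by
    rw [Nat.cast_ne_zero]; omega
  have := mul_ne_zero h5 (mul_ne_zero (leadingCoeff_ne_zero.2 hRne) (leadingCoeff_ne_zero.2 hn))
  exact this h4

namespace GDL
variable {E : Type*} [Field E]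

/-- coefficientwise map -/
def cmap (φ : ℤ → E →+ E) : HahnSeries ℤ E →+ HahnSeries ℤ E where
  toFun u :=
    { coeff := fun n => φ n (u.coeff n)
      isPWO_support' := u.isPWO_support.mono (by
        intro n hn
        simp only [Function.mem_support] at hn
        rw [HahnSeries.mem_support]
        intro h
        exact hn (by rw [h, map_zero])) }
  map_zero' := by ext n; simp
  map_add' u v := by ext n; simp

theorem cmap_coeff (φ : ℤ → E →+ E) (u : HahnSeries ℤ E) (n : ℤ) :
    (cmap φ u).coeff n = φ n (u.coeff n) := rfl

theorem cmap_supp (φ : ℤ → E →+ E) (u : HahnSeries ℤ E) : (cmap φ u).support ⊆ u.support := by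
  intro n hn
  rw [HahnSeries.mem_support] at hn ⊢
  intro h
  exact hn (by rw [cmap_coeff, h, map_zero])

theorem cmap_single (φ : ℤ → E →+ E) (n : ℤ) (a : E) :
    cmap φ (HahnSeries.single n a) = HahnSeries.single n (φ n a) := by
  ext m
  rw [cmap_coeff, HahnSeries.coeff_single, HahnSeries.coeff_single]
  split_ifs with h
  · rw [h]
  · simp

/-- Leibniz rule -/
def IsDer {L : Type*} [Field L] (D : L →+ L) : Prop := ∀ a b, D (a * b) = a * D b + b * D a

theorem cmap_der (φ : ℤ → E →+ E) (h : ∀ i j a b, φ (i + j) (a * b) = a * φ j b + b * φ i a) :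
    IsDer (cmap φ) := by
  intro u v
  ext n
  rw [cmap_coeff, HahnSeries.coeff_add, HahnSeries.coeff_mul, mul_comm v,
    HahnSeries.coeff_mul_right' v.isPWO_support (cmap_supp φ v),
    HahnSeries.coeff_mul_left' u.isPWO_support (cmap_supp φ u), map_sum, ← Finset.sum_add_distrib]
  refine Finset.sum_congr rfl ?_
  rintro ⟨i, j⟩ hij
  have : i + j = n := by simpa using (by simpa [Finset.mem_addAntidiagonal] using hij : _ ∧ _ ∧ _).2.2
  subst this
  rw [h, cmap_coeff, cmap_coeff, mul_comm (φ i _)]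

theorem cmap_mul (φ : ℤ → E →+ E) (h : ∀ i j a b, φ (i + j) (a * b) = φ i a * φ j b)
    (u v : HahnSeries ℤ E) : cmap φ (u * v) = cmap φ u * cmap φ v := by
  ext n
  rw [cmap_coeff, HahnSeries.coeff_mul, 
    HahnSeries.coeff_mul_right' v.isPWO_support (cmap_supp φ v), map_sum]
  symm
  refine (Finset.sum_subset ?_ ?_).trans (Finset.sum_congr rfl ?_)
  · rintro ⟨i, j⟩ hij
    rw [Finset.mem_addAntidiagonal] at hij ⊢
    exact ⟨cmap_supp φ u hij.1, hij.2⟩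
  · rintro ⟨i, j⟩ hij hn
    rw [Finset.mem_addAntidiagonal] at hij hn
    have : (cmap φ u).coeff i = 0 := by
      by_contra h
      exact hn ⟨h, hij.2⟩
    simp only [this, zero_mul]
  · rintro ⟨i, j⟩ hij
    rw [Finset.mem_addAntidiagonal] at hij
    obtain ⟨-, -, h3⟩ := hij
    simp only at h3
    subst h3
    rw [h, cmap_coeff, cmap_coeff]

theorem IsDer.one {L : Type*} [Field L] {D : L →+ L} (h : IsDer D) : D 1 = 0 := by
  have := h 1 1
  simp at this
  exact this

theorem IsDer.inv {L : Type*} [Field L] {D : L →+ L} (h : IsDer D) {a : L} (ha : a ≠ 0) :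
    D a⁻¹ = - D a / a ^ 2 := by
  have := h a a⁻¹
  rw [mul_inv_cancel₀ ha, h.one] at this
  field_simp at this ⊢
  linear_combination -this

theorem IsDer.div {L : Type*} [Field L] {D : L →+ L} (h : IsDer D) {a b : L} (hb : b ≠ 0) :
    D (a / b) = (D a * b - a * D b) / b ^ 2 := by
  rw [div_eq_mul_inv, h, h.inv hb]
  field_simp
  ring

theorem log_comm {L : Type*} [Field L] {D D' : L →+ L} (h : IsDer D) (h' : IsDer D')
    (hc : ∀ a, D (D' a) = D' (D a)) {F : L} (hF : F ≠ 0) : D (D' F / F) = D' (D F / F) := by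
  rw [h.div hF, h'.div hF, hc]
  ring

end GDL

/-- Abstract data: the field `E = ℝ(x,y,z)` with the derivation along the level curves. -/
structure GDData (E : Type*) [Field E] where
  d : Derivation ℤ E E
  x : E
  y : E
  z : E
  a : E
  tx : E →+* E
  ty : E →+* E
  tz : E →+* E
  tm : E →+* E
  hx : x ≠ 0
  hy : y ≠ 0
  hz : z ≠ 0
  ha : a ≠ 0
  dx : d x = -a / (2 * x)
  dy : d y = 1 / (2 * y)
  dz : d z = -1 / (2 * z)
  da : d a = 0
  txa : tx a = a
  tya : ty a = a
  tza : tz a = a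
  tma : tm a = a
  txx : tx x = -x
  txy : tx y = y
  txz : tx z = z
  tyx : ty x = x
  tyy : ty y = -y
  tyz : ty z = z
  tzx : tz x = x
  tzy : tz y = y
  tzz : tz z = -z
  tmx : tm x = -x
  tmy : tm y = -y
  tmz : tm z = -z
  hI1 : x ^ 2 + a * y ^ 2 ≠ 0
  hI2 : y ^ 2 + z ^ 2 ≠ 0
  hI12 : x ^ 2 - a * z ^ 2 ≠ 0
  gen : ∀ F : Subfield E, (∀ c, d c = 0 → tx c = c → ty c = c → tz c = c → tm c = c → c ∈ F) →
    x ∈ F → y ∈ F → z ∈ F → F = ⊤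

theorem gdp_sqrtExt {E : Type*} [Field E] [CharZero E] (F : Subfield E) (t : E) (ht : t ^ 2 ∈ F) :
    ∃ F' : Subfield E, ∀ u, u ∈ F' ↔ ∃ a ∈ F, ∃ b ∈ F, u = a + b * t := by
  refine ⟨{ carrier := {u | ∃ a ∈ F, ∃ b ∈ F, u = a + b * t}
            mul_mem' := ?_, one_mem' := ⟨1, F.one_mem, 0, F.zero_mem, by ring⟩
            add_mem' := ?_, zero_mem' := ⟨0, F.zero_mem, 0, F.zero_mem, by ring⟩
            neg_mem' := ?_, inv_mem' := ?_ }, fun u => Iff.rfl⟩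
  · rintro _ _ ⟨a, ha, b, hb, rfl⟩ ⟨c, hc, e, he, rfl⟩
    exact ⟨a * c + b * e * t ^ 2, F.add_mem (F.mul_mem ha hc) (F.mul_mem (F.mul_mem hb he) ht),
      a * e + b * c, F.add_mem (F.mul_mem ha he) (F.mul_mem hb hc), by ring⟩
  · rintro _ _ ⟨a, ha, b, hb, rfl⟩ ⟨c, hc, e, he, rfl⟩
    exact ⟨a + c, F.add_mem ha hc, b + e, F.add_mem hb he, by ring⟩
  · rintro _ ⟨a, ha, b, hb, rfl⟩
    exact ⟨-a, F.neg_mem ha, -b, F.neg_mem hb, by ring⟩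
  · rintro _ ⟨a, ha, b, hb, rfl⟩
    by_cases h0 : a + b * t = 0
    · exact ⟨0, F.zero_mem, 0, F.zero_mem, by rw [h0]; simp⟩
    by_cases h1 : a - b * t = 0
    · refine ⟨(a + a)⁻¹, F.inv_mem (F.add_mem ha ha), 0, F.zero_mem, ?_⟩
      have : b * t = a := by linear_combination -h1
      rw [this]; ring
    · have hn : a ^ 2 - b ^ 2 * t ^ 2 ≠ 0 := by
        have := mul_ne_zero h0 h1
        intro h; apply this; linear_combination h
      have hnF : (a ^ 2 - b ^ 2 * t ^ 2)⁻¹ ∈ F :=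
        F.inv_mem (F.sub_mem (F.pow_mem ha 2) (F.mul_mem (F.pow_mem hb 2) ht))
      refine ⟨a * (a ^ 2 - b ^ 2 * t ^ 2)⁻¹, F.mul_mem ha hnF,
        (-b) * (a ^ 2 - b ^ 2 * t ^ 2)⁻¹, F.mul_mem (F.neg_mem hb) hnF, ?_⟩
      apply mul_left_cancel₀ h0
      rw [mul_inv_cancel₀ h0]
      apply mul_left_cancel₀ hn
      field_simp
      ring

namespace GDData
variable {E : Type*} [Field E] (G : GDData E)

/-- The field of symmetric constants. -/
def K : Subfield E where
  carrier := {c | G.d c = 0 ∧ G.tx c = c ∧ G.ty c = c ∧ G.tz c = c ∧ G.tm c = c}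
  mul_mem' := by
    rintro a b ⟨h1, h2, h3, h4, h5⟩ ⟨g1, g2, g3, g4, g5⟩
    simp [Derivation.leibniz, *]
  one_mem' := by simp
  add_mem' := by
    rintro a b ⟨h1, h2, h3, h4, h5⟩ ⟨g1, g2, g3, g4, g5⟩
    simp [*]
  zero_mem' := by simp
  neg_mem' := by
    rintro a ⟨h1, h2, h3, h4, h5⟩
    simp [*]
  inv_mem' := by
    rintro a ⟨h1, h2, h3, h4, h5⟩
    simp [Derivation.leibniz_inv, *]

theorem mem_K {c : E} : c ∈ G.K ↔ (G.d c = 0 ∧ G.tx c = c ∧ G.ty c = c ∧ G.tz c = c ∧ G.tm c = c) :=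
  Iff.rfl

theorem a_mem : G.a ∈ G.K := ⟨G.da, G.txa, G.tya, G.tza, G.tma⟩

variable [CharZero E]

theorem dY : G.d (G.y ^ 2) = 1 := by
  have := G.hy
  rw [sq, Derivation.leibniz, G.dy, smul_eq_mul]; field_simp; norm_num
theorem dX : G.d (G.x ^ 2) = -G.a := by
  have := G.hx
  rw [sq, Derivation.leibniz, G.dx, smul_eq_mul]; field_simp; norm_num
theorem dZ : G.d (G.z ^ 2) = -1 := by
  have := G.hz
  rw [sq, Derivation.leibniz, G.dz, smul_eq_mul]; field_simp; norm_num

theorem I1_mem : G.x ^ 2 + G.a * G.y ^ 2 ∈ G.K := by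
  refine ⟨?_, ?_, ?_, ?_, ?_⟩
  · rw [map_add, Derivation.leibniz, G.dX, G.dY, G.da]; simp
  all_goals simp [G.txa, G.tya, G.tza, G.tma, G.txx, G.txy, G.tyx, G.tyy, G.tzx, G.tzy, G.tmx, G.tmy]

theorem I2_mem : G.y ^ 2 + G.z ^ 2 ∈ G.K := by
  refine ⟨?_, ?_, ?_, ?_, ?_⟩
  · rw [map_add, G.dZ, G.dY]; simp
  all_goals simp [G.txz, G.tyz, G.tzz, G.tmz, G.txy, G.tyy, G.tzy, G.tmy]

instance : CharZero G.K := ⟨fun m n h => by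
  have := congrArg (Subtype.val) h
  push_cast at this
  exact_mod_cast this⟩

open Polynomial

theorem d_aeval (p : G.K[X]) : G.d (aeval (G.y ^ 2) p) = aeval (G.y ^ 2) (derivative p) := by
  induction p using Polynomial.induction_on' with
  | add p q hp hq => simp [hp, hq]
  | monomial n c =>
    have hc : G.d (c : E) = 0 := c.2.1
    rw [aeval_monomial, Derivation.leibniz, derivative_monomial, aeval_monomial,
      Derivation.leibniz_pow, G.dY]
    change _ + _ • G.d (c : E) = _
    rw [hc]
    simp only [smul_eq_mul, nsmul_eq_mul, map_mul, map_natCast]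
    ring

theorem aeval_inj (p : G.K[X]) (h : aeval (G.y ^ 2) p = 0) : p = 0 := by
  induction hn : p.natDegree using Nat.strong_induction_on generalizing p with
  | _ n ih =>
    by_cases h0 : p.natDegree = 0
    · rw [eq_C_of_natDegree_eq_zero h0, aeval_C] at h
      have h1 : p.coeff 0 = 0 := by
        apply Subtype.ext
        exact h
      rw [eq_C_of_natDegree_eq_zero h0, h1, C_0]
    · have h1 := G.d_aeval p
      rw [h, map_zero] at h1
      have h2 := ih _ (hn ▸ natDegree_derivative_lt h0) _ h1.symm rfl
      exact absurd (derivative_eq_zero.1 h2) h0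

/-- Symmetric subfield. -/
noncomputable def F0 : IntermediateField G.K E := IntermediateField.adjoin G.K {G.y ^ 2}

theorem mem_F0 {r : E} : r ∈ G.F0 ↔ ∃ n s : G.K[X], r = aeval (G.y ^ 2) n / aeval (G.y ^ 2) s :=
  IntermediateField.mem_adjoin_simple_iff G.K r

theorem mem_F0' {r : E} (h : r ∈ G.F0) : ∃ n s : G.K[X], s ≠ 0 ∧ IsCoprime n s ∧
    r = aeval (G.y ^ 2) n / aeval (G.y ^ 2) s := by
  obtain ⟨n, s, rfl⟩ := G.mem_F0.1 h
  by_cases hs : s = 0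
  · subst hs
    exact ⟨0, 1, one_ne_zero, isCoprime_one_right, by simp⟩
  · letI : GCDMonoid G.K[X] := UniqueFactorizationMonoid.toGCDMonoid _
    have hg : gcd n s ≠ 0 := fun h => hs ((_root_.gcd_eq_zero_iff _ _).1 h).2
    have h1 : gcd n s * (n / gcd n s) = n := EuclideanDomain.mul_div_cancel' hg (gcd_dvd_left _ _)
    have h2 : gcd n s * (s / gcd n s) = s := EuclideanDomain.mul_div_cancel' hg (gcd_dvd_right _ _)
    refine ⟨n / gcd n s, s / gcd n s, ?_, isCoprime_div_gcd_div_gcd hs, ?_⟩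
    · intro h
      rw [h, mul_zero] at h2
      exact hs h2.symm
    · have hne : aeval (G.y ^ 2) (gcd n s) ≠ 0 := fun h => hg (G.aeval_inj _ h)
      rw [← mul_div_mul_left (aeval (G.y ^ 2) (n / gcd n s)) (aeval (G.y ^ 2) (s / gcd n s)) hne,
        ← map_mul, ← map_mul, h1, h2]

theorem d_mem_F0 {r : E} (h : r ∈ G.F0) : G.d r ∈ G.F0 := by
  obtain ⟨n, s, rfl⟩ := G.mem_F0.1 h
  have hm : ∀ p : G.K[X], aeval (G.y ^ 2) p ∈ G.F0 := fun p =>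
    G.mem_F0.2 ⟨p, 1, by simp⟩
  rw [Derivation.leibniz_div, d_aeval, d_aeval]
  simp only [smul_eq_mul]
  exact G.F0.mul_mem (pow_mem (G.F0.inv_mem (hm _)) 2)
    (G.F0.sub_mem (G.F0.mul_mem (hm _) (hm _)) (G.F0.mul_mem (hm _) (hm _)))

theorem fix_F0 (t : E →+* E) (hK : ∀ c ∈ G.K, t c = c) (hY : t (G.y ^ 2) = G.y ^ 2) {r : E}
    (h : r ∈ G.F0) : t r = r := by
  have hm : ∀ p : G.K[X], t (aeval (G.y ^ 2) p) = aeval (G.y ^ 2) p := by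
    intro p
    induction p using Polynomial.induction_on' with
    | add p q hp hq => simp [hp, hq]
    | monomial n c =>
      rw [aeval_monomial, map_mul, map_pow, hY]
      congr 1
      exact hK _ c.2
  obtain ⟨n, s, rfl⟩ := G.mem_F0.1 h
  rw [map_div₀, hm, hm]

theorem tx_F0 {r : E} (h : r ∈ G.F0) : G.tx r = r :=
  G.fix_F0 G.tx (fun _ hc => hc.2.1) (by simp [G.txy]) h
theorem ty_F0 {r : E} (h : r ∈ G.F0) : G.ty r = r :=
  G.fix_F0 G.ty (fun _ hc => hc.2.2.1) (by simp [G.tyy]) h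
theorem tz_F0 {r : E} (h : r ∈ G.F0) : G.tz r = r :=
  G.fix_F0 G.tz (fun _ hc => hc.2.2.2.1) (by simp [G.tzy]) h
theorem tm_F0 {r : E} (h : r ∈ G.F0) : G.tm r = r :=
  G.fix_F0 G.tm (fun _ hc => hc.2.2.2.2) (by simp [G.tmy]) h

theorem K_le_F0 {c : E} (h : c ∈ G.K) : c ∈ G.F0 := G.F0.algebraMap_mem ⟨c, h⟩

theorem Y_mem : G.y ^ 2 ∈ G.F0 := IntermediateField.mem_adjoin_simple_self G.K _
theorem X_mem : G.x ^ 2 ∈ G.F0 := by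
  have := G.F0.sub_mem (G.K_le_F0 G.I1_mem) (G.F0.mul_mem (G.K_le_F0 G.a_mem) G.Y_mem)
  simpa using this
theorem Z_mem : G.z ^ 2 ∈ G.F0 := by
  have := G.F0.sub_mem (G.K_le_F0 G.I2_mem) (G.Y_mem)
  simpa using this

/-- Key lemma on the symmetric subfield. -/
theorem keyF0 {r : E} (h : r ∈ G.F0) (R q : G.K[X]) (hsq : Squarefree R) (hR : 1 ≤ R.natDegree)
    (hq : q = 0 ∨ q.natDegree + 1 < R.natDegree)
    (heq : G.d (aeval (G.y ^ 2) R) * r + 2 * aeval (G.y ^ 2) R * G.d r = aeval (G.y ^ 2) q) :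
    r = 0 := by
  obtain ⟨n, s, hs, hcop, rfl⟩ := G.mem_F0' h
  have hs' : aeval (G.y ^ 2) s ≠ 0 := fun h => hs (G.aeval_inj _ h)
  rw [Derivation.leibniz_div, d_aeval, d_aeval, d_aeval] at heq
  simp only [smul_eq_mul] at heq
  field_simp at heq
  have : n = 0 := by
    refine gdp_poly_core R q n s hsq hcop hs ?_ hR hq
    rw [← sub_eq_zero]
    apply G.aeval_inj
    simp only [map_sub, map_add, map_mul, map_pow, map_ofNat]
    linear_combination heq
  simp [this]

theorem decomp (u : E) : ∃ r0 ∈ G.F0, ∃ r1 ∈ G.F0, ∃ r2 ∈ G.F0, ∃ r3 ∈ G.F0, ∃ r4 ∈ G.F0,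
    ∃ r5 ∈ G.F0, ∃ r6 ∈ G.F0, ∃ r7 ∈ G.F0,
    u = r0 + r1 * G.x + r2 * G.y + r3 * G.z + r4 * (G.x * G.y) + r5 * (G.x * G.z)
      + r6 * (G.y * G.z) + r7 * (G.x * G.y * G.z) := by
  obtain ⟨F1, hF1⟩ := gdp_sqrtExt G.F0.toSubfield G.x G.X_mem
  have l1 : ∀ r ∈ G.F0, r ∈ F1 := fun r hr => (hF1 r).2 ⟨r, hr, 0, G.F0.zero_mem, by ring⟩
  obtain ⟨F2, hF2⟩ := gdp_sqrtExt F1 G.y (l1 _ G.Y_mem)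
  have l2 : ∀ r ∈ F1, r ∈ F2 := fun r hr => (hF2 r).2 ⟨r, hr, 0, F1.zero_mem, by ring⟩
  obtain ⟨F3, hF3⟩ := gdp_sqrtExt F2 G.z (l2 _ (l1 _ G.Z_mem))
  have l3 : ∀ r ∈ F2, r ∈ F3 := fun r hr => (hF3 r).2 ⟨r, hr, 0, F2.zero_mem, by ring⟩
  have htop : F3 = ⊤ := by
    apply G.gen
    · intro c h1 h2 h3 h4 h5
      exact l3 _ (l2 _ (l1 _ (G.K_le_F0 ⟨h1, h2, h3, h4, h5⟩)))
    · exact l3 _ (l2 _ ((hF1 _).2 ⟨0, G.F0.zero_mem, 1, G.F0.one_mem, by ring⟩))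
    · exact l3 _ ((hF2 _).2 ⟨0, F1.zero_mem, 1, F1.one_mem, by ring⟩)
    · exact (hF3 _).2 ⟨0, F2.zero_mem, 1, F2.one_mem, by ring⟩
  have hu : u ∈ F3 := by rw [htop]; exact Subfield.mem_top u
  obtain ⟨p, hp, q, hq, rfl⟩ := (hF3 _).1 hu
  obtain ⟨p0, hp0, p1, hp1, rfl⟩ := (hF2 _).1 hp
  obtain ⟨q0, hq0, q1, hq1, rfl⟩ := (hF2 _).1 hq
  obtain ⟨r0, h0, r1, h1, rfl⟩ := (hF1 _).1 hp0
  obtain ⟨r2, h2, r4, h4, rfl⟩ := (hF1 _).1 hp1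
  obtain ⟨r3, h3, r5, h5, rfl⟩ := (hF1 _).1 hq0
  obtain ⟨r6, h6, r7, h7, rfl⟩ := (hF1 _).1 hq1
  exact ⟨r0, h0, r1, h1, r2, h2, r3, h3, r4, h4, r5, h5, r6, h6, r7, h7, by ring⟩

theorem indep {r0 r1 r2 r3 r4 r5 r6 r7 : E} (h0 : r0 ∈ G.F0) (h1 : r1 ∈ G.F0) (h2 : r2 ∈ G.F0)
    (h3 : r3 ∈ G.F0) (h4 : r4 ∈ G.F0) (h5 : r5 ∈ G.F0) (h6 : r6 ∈ G.F0) (h7 : r7 ∈ G.F0)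
    (h : r0 + r1 * G.x + r2 * G.y + r3 * G.z + r4 * (G.x * G.y) + r5 * (G.x * G.z)
      + r6 * (G.y * G.z) + r7 * (G.x * G.y * G.z) = 0) :
    r0 = 0 ∧ r1 = 0 ∧ r2 = 0 ∧ r3 = 0 ∧ r4 = 0 ∧ r5 = 0 ∧ r6 = 0 ∧ r7 = 0 := by
  have hx := G.hx
  have hy := G.hy
  have hz := G.hz
  have splitx : ∀ p q : E, G.tx p = p → G.tx q = q → p + q * G.x = 0 → p = 0 ∧ q = 0 := by
    intro p q hp hq h
    have h' := congrArg G.tx h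
    rw [map_add, map_mul, hp, hq, G.txx, map_zero] at h'
    have hp0 : p = 0 := by
      have : 2 * p = 0 := by linear_combination h + h'
      simpa using this
    rw [hp0, zero_add] at h
    exact ⟨hp0, (mul_eq_zero.1 h).resolve_right hx⟩
  have splity : ∀ p q : E, G.ty p = p → G.ty q = q → p + q * G.y = 0 → p = 0 ∧ q = 0 := by
    intro p q hp hq h
    have h' := congrArg G.ty h
    rw [map_add, map_mul, hp, hq, G.tyy, map_zero] at h'
    have hp0 : p = 0 := by
      have : 2 * p = 0 := by linear_combination h + h'
      simpa using this
    rw [hp0, zero_add] at h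
    exact ⟨hp0, (mul_eq_zero.1 h).resolve_right hy⟩
  have splitz : ∀ p q : E, G.tz p = p → G.tz q = q → p + q * G.z = 0 → p = 0 ∧ q = 0 := by
    intro p q hp hq h
    have h' := congrArg G.tz h
    rw [map_add, map_mul, hp, hq, G.tzz, map_zero] at h'
    have hp0 : p = 0 := by
      have : 2 * p = 0 := by linear_combination h + h'
      simpa using this
    rw [hp0, zero_add] at h
    exact ⟨hp0, (mul_eq_zero.1 h).resolve_right hz⟩
  obtain ⟨e1, e2⟩ := splitz (r0 + r1 * G.x + r2 * G.y + r4 * (G.x * G.y))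
    (r3 + r5 * G.x + r6 * G.y + r7 * (G.x * G.y))
    (by simp [G.tz_F0, h0, h1, h2, h4, G.tzx, G.tzy])
    (by simp [G.tz_F0, h3, h5, h6, h7, G.tzx, G.tzy]) (by linear_combination h)
  obtain ⟨f1, f2⟩ := splity (r0 + r1 * G.x) (r2 + r4 * G.x)
    (by simp [G.ty_F0, h0, h1, G.tyx])
    (by simp [G.ty_F0, h2, h4, G.tyx]) (by linear_combination e1)
  obtain ⟨f3, f4⟩ := splity (r3 + r5 * G.x) (r6 + r7 * G.x)
    (by simp [G.ty_F0, h3, h5, G.tyx])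
    (by simp [G.ty_F0, h6, h7, G.tyx]) (by linear_combination e2)
  obtain ⟨g0, g1⟩ := splitx r0 r1 (G.tx_F0 h0) (G.tx_F0 h1) f1
  obtain ⟨g2, g4⟩ := splitx r2 r4 (G.tx_F0 h2) (G.tx_F0 h4) f2
  obtain ⟨g3, g5⟩ := splitx r3 r5 (G.tx_F0 h3) (G.tx_F0 h5) f3
  obtain ⟨g6, g7⟩ := splitx r6 r7 (G.tx_F0 h6) (G.tx_F0 h7) f4
  exact ⟨g0, g1, g2, g3, g4, g5, g6, g7⟩
end GDData

namespace GDData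
variable {E : Type*} [Field E] (G : GDData E) [CharZero E]
open Polynomial

/-- polynomial of `x^2` -/
noncomputable def pX : G.K[X] := C ⟨_, G.I1_mem⟩ - C ⟨_, G.a_mem⟩ * X
/-- polynomial of `z^2` -/
noncomputable def pZ : G.K[X] := C ⟨_, G.I2_mem⟩ - X

theorem aeval_pX : aeval (G.y ^ 2) G.pX = G.x ^ 2 := by
  rw [pX, map_sub, map_mul, aeval_C, aeval_C, aeval_X]
  change G.x ^ 2 + G.a * G.y ^ 2 - G.a * G.y ^ 2 = _
  ring
theorem aeval_pZ : aeval (G.y ^ 2) G.pZ = G.z ^ 2 := by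
  rw [pZ, map_sub, aeval_C, aeval_X]
  change G.y ^ 2 + G.z ^ 2 - G.y ^ 2 = _
  ring

theorem a'_ne : (⟨_, G.a_mem⟩ : G.K) ≠ 0 := fun h => G.ha (congrArg Subtype.val h)

theorem degX : G.pX.degree = 1 := by
  have h : G.pX = C (-⟨_, G.a_mem⟩) * X + C ⟨_, G.I1_mem⟩ := by rw [pX, C_neg]; ring
  rw [h]; exact degree_linear (neg_ne_zero.2 G.a'_ne)
theorem degZ : G.pZ.degree = 1 := by
  have h : G.pZ = C (-1) * X + C ⟨_, G.I2_mem⟩ := by rw [pZ, C_neg, C_1]; ring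
  rw [h]; exact degree_linear (by simp)

theorem cop_XY : IsCoprime G.pX (X : G.K[X]) := by
  have hne : (⟨_, G.I1_mem⟩ : G.K) ≠ 0 := fun h => G.hI1 (congrArg Subtype.val h)
  refine ⟨C (⟨_, G.I1_mem⟩ : G.K)⁻¹, C (⟨_, G.I1_mem⟩ : G.K)⁻¹ * C ⟨_, G.a_mem⟩, ?_⟩
  have : C (⟨_, G.I1_mem⟩ : G.K)⁻¹ * C ⟨_, G.I1_mem⟩ = (1 : G.K[X]) := by
    rw [← C_mul, inv_mul_cancel₀ hne, C_1]
  rw [pX]; linear_combination this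

theorem cop_ZY : IsCoprime G.pZ (X : G.K[X]) := by
  have hne : (⟨_, G.I2_mem⟩ : G.K) ≠ 0 := fun h => G.hI2 (congrArg Subtype.val h)
  refine ⟨C (⟨_, G.I2_mem⟩ : G.K)⁻¹, C (⟨_, G.I2_mem⟩ : G.K)⁻¹, ?_⟩
  have : C (⟨_, G.I2_mem⟩ : G.K)⁻¹ * C ⟨_, G.I2_mem⟩ = (1 : G.K[X]) := by
    rw [← C_mul, inv_mul_cancel₀ hne, C_1]
  rw [pZ]; linear_combination this

theorem cop_XZ : IsCoprime G.pX G.pZ := by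
  set w : G.K := (⟨_, G.I1_mem⟩ : G.K) - ⟨_, G.a_mem⟩ * ⟨_, G.I2_mem⟩ with hw
  have hne : w ≠ 0 := by
    intro h
    apply G.hI12
    have := congrArg Subtype.val h
    have h2 : G.x ^ 2 + G.a * G.y ^ 2 - G.a * (G.y ^ 2 + G.z ^ 2) = 0 := this
    linear_combination h2
  refine ⟨C w⁻¹, - C w⁻¹ * C ⟨_, G.a_mem⟩, ?_⟩
  have h1 : C w⁻¹ * C w = (1 : G.K[X]) := by
    rw [← C_mul, inv_mul_cancel₀ hne, C_1]
  have h2 : C w = C (⟨_, G.I1_mem⟩ : G.K) - C ⟨_, G.a_mem⟩ * C ⟨_, G.I2_mem⟩ := by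
    rw [hw, C_sub, C_mul]
  rw [h2] at h1
  rw [pX, pZ]; linear_combination h1

theorem sq_XYZ : Squarefree (G.pX * X * G.pZ) := by
  have s1 := (irreducible_of_degree_eq_one G.degX).squarefree
  have s2 := (irreducible_X (R := G.K)).squarefree
  have s3 := (irreducible_of_degree_eq_one G.degZ).squarefree
  refine squarefree_mul_iff.2 ⟨?_, squarefree_mul_iff.2 ⟨G.cop_XY.isRelPrime, s1, s2⟩, s3⟩
  exact (IsCoprime.mul_left G.cop_XZ G.cop_ZY.symm).isRelPrime

theorem ndX : G.pX.natDegree = 1 := natDegree_eq_of_degree_eq_some G.degX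
theorem ndZ : G.pZ.natDegree = 1 := natDegree_eq_of_degree_eq_some G.degZ
theorem pX_ne : G.pX ≠ 0 := fun h => by have := G.ndX; simp [h] at this
theorem pZ_ne : G.pZ ≠ 0 := fun h => by have := G.ndZ; simp [h] at this

theorem deriv_decomp (r0 r1 r2 r3 r4 r5 r6 r7 : E) :
    -2 * (G.x * G.y * G.z) * G.d (r0 + r1 * G.x + r2 * G.y + r3 * G.z + r4 * (G.x * G.y)
      + r5 * (G.x * G.z) + r6 * (G.y * G.z) + r7 * (G.x * G.y * G.z)) =
    -(G.d (G.x ^ 2 * G.y ^ 2 * G.z ^ 2) * r7 + 2 * (G.x ^ 2 * G.y ^ 2 * G.z ^ 2) * G.d r7)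
    + -(G.d (G.y ^ 2 * G.z ^ 2) * r6 + 2 * (G.y ^ 2 * G.z ^ 2) * G.d r6) * G.x
    + -(G.d (G.x ^ 2 * G.z ^ 2) * r5 + 2 * (G.x ^ 2 * G.z ^ 2) * G.d r5) * G.y
    + -(G.d (G.x ^ 2 * G.y ^ 2) * r4 + 2 * (G.x ^ 2 * G.y ^ 2) * G.d r4) * G.z
    + -(G.d (G.z ^ 2) * r3 + 2 * (G.z ^ 2) * G.d r3) * (G.x * G.y)
    + -(G.d (G.y ^ 2) * r2 + 2 * (G.y ^ 2) * G.d r2) * (G.x * G.z)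
    + -(G.d (G.x ^ 2) * r1 + 2 * (G.x ^ 2) * G.d r1) * (G.y * G.z)
    + -(2 * G.d r0) * (G.x * G.y * G.z) := by
  have hx := G.hx
  have hy := G.hy
  have hz := G.hz
  simp only [map_add, Derivation.leibniz, smul_eq_mul, G.dX, G.dY, G.dZ, G.dx, G.dy, G.dz]
  field_simp
  ring

/-- The three consequences of the decomposition. -/
theorem main_decomp (u c0 c1 c2 c3 : E) (b : E) (h0 : c0 ∈ G.K) (h1 : c1 ∈ G.K) (h2 : c2 ∈ G.K)
    (h3 : c3 ∈ G.K) (hb : b ∈ G.K)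
    (h : -2 * (G.x * G.y * G.z) * G.d u + c0 + b * G.y ^ 2 + c1 * G.y + c2 * (G.x * G.z)
      + c3 * (G.x * G.y * G.z) = 0) :
    c0 = 0 ∧ b = 0 ∧ c1 = 0 ∧ (c2 = 0 → c3 = 0 → u ∈ G.K) := by
  obtain ⟨r0, g0, r1, g1, r2, g2, r3, g3, r4, g4, r5, g5, r6, g6, r7, g7, hu⟩ := G.decomp u
  have hdef := hu
  rw [hu, deriv_decomp] at h
  have mk : ∀ ρ ∈ G.F0, ∀ r ∈ G.F0, -(G.d ρ * r + 2 * ρ * G.d r) ∈ G.F0 := by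
    intro ρ hρ r hr
    refine G.F0.neg_mem (G.F0.add_mem (G.F0.mul_mem (G.d_mem_F0 hρ) hr) (G.F0.mul_mem
      (G.F0.mul_mem ?_ hρ) (G.d_mem_F0 hr)))
    exact ofNat_mem G.F0 2
  have kX := G.X_mem
  have kY := G.Y_mem
  have kZ := G.Z_mem
  have two : (2 : E) ∈ G.F0 := ofNat_mem G.F0 2
  obtain ⟨e0, e1, e2, e3, e4, e5, e6, e7⟩ := G.indep
    (r0 := -(G.d (G.x ^ 2 * G.y ^ 2 * G.z ^ 2) * r7 + 2 * (G.x ^ 2 * G.y ^ 2 * G.z ^ 2) * G.d r7)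
      + (c0 + b * G.y ^ 2))
    (r1 := -(G.d (G.y ^ 2 * G.z ^ 2) * r6 + 2 * (G.y ^ 2 * G.z ^ 2) * G.d r6))
    (r2 := -(G.d (G.x ^ 2 * G.z ^ 2) * r5 + 2 * (G.x ^ 2 * G.z ^ 2) * G.d r5) + c1)
    (r3 := -(G.d (G.x ^ 2 * G.y ^ 2) * r4 + 2 * (G.x ^ 2 * G.y ^ 2) * G.d r4))
    (r4 := -(G.d (G.z ^ 2) * r3 + 2 * (G.z ^ 2) * G.d r3))
    (r5 := -(G.d (G.y ^ 2) * r2 + 2 * (G.y ^ 2) * G.d r2) + c2)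
    (r6 := -(G.d (G.x ^ 2) * r1 + 2 * (G.x ^ 2) * G.d r1))
    (r7 := -(2 * G.d r0) + c3)
    (G.F0.add_mem (mk _ (G.F0.mul_mem (G.F0.mul_mem kX kY) kZ) _ g7)
      (G.F0.add_mem (G.K_le_F0 h0) (G.F0.mul_mem (G.K_le_F0 hb) kY)))
    (mk _ (G.F0.mul_mem kY kZ) _ g6)
    (G.F0.add_mem (mk _ (G.F0.mul_mem kX kZ) _ g5) (G.K_le_F0 h1))
    (mk _ (G.F0.mul_mem kX kY) _ g4)
    (mk _ kZ _ g3)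
    (G.F0.add_mem (mk _ kY _ g2) (G.K_le_F0 h2))
    (mk _ kX _ g1)
    (G.F0.add_mem (G.F0.neg_mem (G.F0.mul_mem two (G.d_mem_F0 g0))) (G.K_le_F0 h3))
    (by linear_combination h)
  have hsq := G.sq_XYZ
  have hXn := G.pX_ne
  have hZn := G.pZ_ne
  have hYn : (X : G.K[X]) ≠ 0 := X_ne_zero
  have hXY := mul_ne_zero hXn hYn
  -- r7
  have i7 : r7 = 0 := by
    refine G.keyF0 g7 (G.pX * X * G.pZ) (C ⟨c0, h0⟩ + C ⟨b, hb⟩ * X) hsq ?_ ?_ ?_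
    · rw [natDegree_mul hXY hZn, natDegree_mul hXn hYn, G.ndX, G.ndZ, natDegree_X]; norm_num
    · right
      rw [natDegree_mul hXY hZn, natDegree_mul hXn hYn, G.ndX, G.ndZ, natDegree_X, add_comm (C _)]
      have := natDegree_linear_le (a := (⟨b, hb⟩ : G.K)) (b := ⟨c0, h0⟩)
      omega
    · rw [map_mul (aeval (G.y ^ 2)) (G.pX * X), map_mul (aeval (G.y ^ 2)) G.pX, G.aeval_pX,
        G.aeval_pZ, map_add (aeval (G.y ^ 2)), map_mul (aeval (G.y ^ 2)), aeval_X, aeval_C, aeval_C]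
      change _ = c0 + b * G.y ^ 2
      linear_combination -e0
  have i5 : r5 = 0 := by
    refine G.keyF0 g5 (G.pX * G.pZ) (C ⟨c1, h1⟩)
      (hsq.squarefree_of_dvd ⟨X, by ring⟩) ?_ ?_ ?_
    · rw [natDegree_mul hXn hZn, G.ndX, G.ndZ]; norm_num
    · right
      rw [natDegree_mul hXn hZn, G.ndX, G.ndZ, natDegree_C]; norm_num
    · rw [map_mul, G.aeval_pX, G.aeval_pZ, aeval_C]
      change _ = c1
      linear_combination -e2
  have f1 : c0 = 0 ∧ b = 0 := by
    rw [i7] at e0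
    have hp : (C ⟨c0, h0⟩ + C ⟨b, hb⟩ * X : G.K[X]) = 0 := by
      apply G.aeval_inj
      rw [map_add, map_mul, aeval_X, aeval_C, aeval_C]
      change c0 + b * G.y ^ 2 = 0
      simpa using e0
    have q0 := congrArg (fun p => (p.coeff 0 : E)) hp
    have q1 := congrArg (fun p => (p.coeff 1 : E)) hp
    simp at q0 q1
    exact ⟨q0, q1⟩
  have f2 : c1 = 0 := by
    rw [i5] at e2
    simpa using e2
  refine ⟨f1.1, f1.2, f2, ?_⟩
  rintro rfl rfl
  have i6 : r6 = 0 := by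
    refine G.keyF0 g6 (X * G.pZ) 0 (hsq.squarefree_of_dvd ⟨G.pX, by ring⟩) ?_ (Or.inl rfl) ?_
    · rw [natDegree_mul hYn hZn, natDegree_X]; omega
    · rw [map_mul, aeval_X, G.aeval_pZ, map_zero]
      linear_combination -e1
  have i4 : r4 = 0 := by
    refine G.keyF0 g4 (G.pX * X) 0 (hsq.squarefree_of_dvd ⟨G.pZ, by ring⟩) ?_ (Or.inl rfl) ?_
    · rw [natDegree_mul hXn hYn, natDegree_X]; omega
    · rw [map_mul, aeval_X, G.aeval_pX, map_zero]
      linear_combination -e3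
  have i3 : r3 = 0 := by
    refine G.keyF0 g3 G.pZ 0 (hsq.squarefree_of_dvd ⟨G.pX * X, by ring⟩) ?_ (Or.inl rfl) ?_
    · rw [G.ndZ]
    · rw [G.aeval_pZ, map_zero]
      linear_combination -e4
  have i2 : r2 = 0 := by
    refine G.keyF0 g2 X 0 (hsq.squarefree_of_dvd ⟨G.pX * G.pZ, by ring⟩) ?_ (Or.inl rfl) ?_
    · rw [natDegree_X]
    · rw [aeval_X, map_zero]
      linear_combination -e5
  have i1 : r1 = 0 := by
    refine G.keyF0 g1 G.pX 0 (hsq.squarefree_of_dvd ⟨X * G.pZ, by ring⟩) ?_ (Or.inl rfl) ?_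
    · rw [G.ndX]
    · rw [G.aeval_pX, map_zero]
      linear_combination -e6
  have hur : u = r0 := by rw [hu, i1, i2, i3, i4, i5, i6, i7]; ring
  rw [hur]
  refine ⟨?_, G.tx_F0 g0, G.ty_F0 g0, G.tz_F0 g0, G.tm_F0 g0⟩
  have : 2 * G.d r0 = 0 := by linear_combination -e7
  simpa using this

theorem ker_mem (u : E) (h : G.d u = 0) : u ∈ G.K := by
  have z := G.K.zero_mem
  refine (G.main_decomp u 0 0 0 0 0 z z z z z ?_).2.2.2 rfl rfl
  rw [h]; ring
end GDData

open MvPolynomial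

/-- polynomial ring -/
abbrev GDR := MvPolynomial (Fin 3) ℝ
/-- rational function field -/
def GDE : Type := FractionRing GDR
noncomputable instance : Field GDE := inferInstanceAs (Field (FractionRing GDR))
noncomputable instance : Algebra GDR GDE := inferInstanceAs (Algebra GDR (FractionRing GDR))
instance : IsFractionRing GDR GDE :=
  inferInstanceAs (IsFractionRing GDR (FractionRing GDR))
instance : CharZero GDE :=
  charZero_of_injective_algebraMap (IsFractionRing.injective GDR GDE)
theorem GDE.alg_eq_zero {f : GDR} (h : algebraMap GDR GDE f = 0) : f = 0 :=
  IsFractionRing.injective GDR GDE (by rw [h, map_zero])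

namespace GDE

theorem gsmul (r : GDR) (u : GDE) : r • u = algebraMap GDR GDE r * u := Algebra.smul_def r u

/-- ring hom `f ↦ f + ε δ f` -/
noncomputable def dual (δ : Derivation ℝ GDR GDR) : GDR →+* TrivSqZeroExt GDE GDE where
  toFun f := TrivSqZeroExt.inl (algebraMap GDR GDE f) + TrivSqZeroExt.inr (algebraMap GDR GDE (δ f))
  map_one' := by simp
  map_zero' := by simp
  map_add' f g := by
    ext <;> simp [gsmul]
  map_mul' f g := by
    ext
    · simp
    · simp [Derivation.leibniz, gsmul]
      ring

theorem dual_unit (δ : Derivation ℝ GDR GDR) (f : nonZeroDivisors GDR) : IsUnit (dual δ f) := by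
  rw [TrivSqZeroExt.isUnit_iff_isUnit_fst]
  have : algebraMap GDR GDE f ≠ 0 := fun h => nonZeroDivisors.ne_zero f.2 (alg_eq_zero h)
  simpa [dual] using this

/-- the extension to the fraction field -/
noncomputable def dualE (δ : Derivation ℝ GDR GDR) : GDE →+* TrivSqZeroExt GDE GDE :=
  IsLocalization.lift (M := nonZeroDivisors GDR) (dual_unit δ)

theorem dualE_alg (δ : Derivation ℝ GDR GDR) (f : GDR) :
    dualE δ (algebraMap GDR GDE f) = dual δ f := IsLocalization.lift_eq _ _

theorem dualE_fst (δ : Derivation ℝ GDR GDR) (u : GDE) : (dualE δ u).fst = u := by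
  have : ((TrivSqZeroExt.fstHom ℤ GDE GDE).toRingHom.comp (dualE δ)) = RingHom.id GDE := by
    apply IsLocalization.ringHom_ext (nonZeroDivisors GDR)
    ext f
    · simp [dualE_alg, dual]
    · simp [dualE_alg, dual]
  exact RingHom.congr_fun this u

/-- Extension of a derivation to the fraction field. -/
noncomputable def ext (δ : Derivation ℝ GDR GDR) : Derivation ℤ GDE GDE :=
  Derivation.mk' (AddMonoidHom.toIntLinearMap
    { toFun := fun u => (dualE δ u).snd
      map_zero' := by simp
      map_add' := by intro u v; simp }) (by
    intro u v
    simp [dualE_fst, mul_comm, add_comm])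

theorem ext_alg (δ : Derivation ℝ GDR GDR) (f : GDR) :
    ext δ (algebraMap GDR GDE f) = algebraMap GDR GDE (δ f) := by
  change (dualE δ (algebraMap GDR GDE f)).snd = _
  simp [dualE_alg, dual, gsmul]

/-- coordinates -/
noncomputable def x (i : Fin 3) : GDE := algebraMap GDR GDE (X i)
/-- constants -/
noncomputable def c (r : ℝ) : GDE := algebraMap GDR GDE (C r)

theorem c_mul (r s : ℝ) : c (r * s) = c r * c s := by simp [c]
theorem c_add (r s : ℝ) : c (r + s) = c r + c s := by simp [c]
theorem c_inj {r : ℝ} (h : c r = 0) : r = 0 := by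
  exact C_injective _ _ (by rw [alg_eq_zero h, map_zero])

theorem x_ne (i : Fin 3) : x i ≠ 0 := by
  exact fun h => X_ne_zero i (alg_eq_zero h)

/-- partial derivatives -/
noncomputable def pd (i : Fin 3) : Derivation ℤ GDE GDE := ext (pderiv i)
theorem pd_c (i : Fin 3) (r : ℝ) : pd i (c r) = 0 := by
  simp [pd, c, ext_alg]
theorem pd_x_same (i : Fin 3) : pd i (x i) = 1 := by
  simp [pd, x, ext_alg]
theorem pd_x_ne {i j : Fin 3} (h : j ≠ i) : pd i (x j) = 0 := by
  simp [pd, x, ext_alg, pderiv_X_of_ne h]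

theorem gen0 (F : Subfield GDE) (hc : ∀ r, c r ∈ F) (hx : ∀ i, x i ∈ F) : F = ⊤ := by
  have h1 : ∀ f : GDR, algebraMap GDR GDE f ∈ F := by
    intro f
    induction f using MvPolynomial.induction_on with
    | C r => exact hc r
    | add p q hp hq => rw [map_add]; exact F.add_mem hp hq
    | mul_X p i hp => rw [map_mul]; exact F.mul_mem hp (hx i)
  rw [eq_top_iff]
  intro u _
  obtain ⟨f, g, -, rfl⟩ := IsFractionRing.div_surjective (A := GDR) u
  exact F.div_mem (h1 f) (h1 g)

theorem der_ext {D D' : Derivation ℤ GDE GDE} (hc : ∀ r, D (c r) = D' (c r))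
    (hx : ∀ i, D (x i) = D' (x i)) : D = D' := by
  let F : Subfield GDE :=
    { carrier := {u | D u = D' u}
      mul_mem' := by
        intro a b ha hb
        simp only [Set.mem_ofPred_eq] at *
        simp [Derivation.leibniz, ha, hb]
      one_mem' := by simp
      add_mem' := by
        intro a b ha hb
        simp only [Set.mem_ofPred_eq] at *
        simp [ha, hb]
      zero_mem' := by simp
      neg_mem' := by
        intro a ha
        simp only [Set.mem_ofPred_eq] at *
        simp [ha]
      inv_mem' := by
        intro a ha
        simp only [Set.mem_ofPred_eq] at *
        simp [Derivation.leibniz_inv, ha] }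
  have hF : F = ⊤ := gen0 F hc hx
  ext u
  have : u ∈ F := by rw [hF]; exact Subfield.mem_top u
  exact this

/-- sign change on polynomials -/
noncomputable def sgn (s : Fin 3 → ℝ) : GDR →+* GDR :=
  (aeval (fun i => C (s i) * X i) : GDR →ₐ[ℝ] GDR).toRingHom

theorem sgn_X (s : Fin 3 → ℝ) (i : Fin 3) : sgn s (X i) = C (s i) * X i := by simp [sgn]
theorem sgn_C (s : Fin 3 → ℝ) (r : ℝ) : sgn s (C r) = C r := by
  change aeval _ (C r) = _
  rw [aeval_C]; rfl

theorem sgn_inj (s : Fin 3 → ℝ) (hs : ∀ i, s i * s i = 1) : Function.Injective (sgn s) := by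
  apply Function.LeftInverse.injective (g := sgn s)
  intro f
  induction f using MvPolynomial.induction_on with
  | C r => rw [sgn_C, sgn_C]
  | add p q hp hq => rw [map_add, map_add, hp, hq]
  | mul_X p i hp =>
    rw [map_mul, map_mul, hp, sgn_X, map_mul, sgn_X, sgn_C, ← mul_assoc (C _), ← C_mul, hs, C_1,
      one_mul]

/-- sign change on rational functions -/
noncomputable def tau (s : Fin 3 → ℝ) (hs : ∀ i, s i * s i = 1) : GDE →+* GDE :=
  IsFractionRing.lift (A := GDR) (g := (algebraMap GDR GDE).comp (sgn s))
    ((IsFractionRing.injective GDR GDE).comp (sgn_inj s hs))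

theorem tau_alg (s : Fin 3 → ℝ) (hs : ∀ i, s i * s i = 1) (f : GDR) :
    tau s hs (algebraMap GDR GDE f) = algebraMap GDR GDE (sgn s f) := by
  exact IsFractionRing.lift_algebraMap _ f

theorem tau_c (s : Fin 3 → ℝ) (hs : ∀ i, s i * s i = 1) (r : ℝ) : tau s hs (c r) = c r := by
  rw [c, tau_alg, sgn_C]
theorem tau_x (s : Fin 3 → ℝ) (hs : ∀ i, s i * s i = 1) (i : Fin 3) :
    tau s hs (x i) = c (s i) * x i := by
  rw [x, tau_alg, sgn_X, map_mul]; rfl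

theorem c_one : c 1 = 1 := by simp [c]
theorem c_neg (r : ℝ) : c (-r) = -c r := by simp [c]

/-- dI1 dual vector field -/
noncomputable def X1 : Derivation ℤ GDE GDE := (1 / (2 * x 0)) • pd 0
/-- dI2 dual vector field -/
noncomputable def X2 : Derivation ℤ GDE GDE := (1 / (2 * x 2)) • pd 2
/-- dY dual vector field -/
noncomputable def X3 (A : ℝ) : Derivation ℤ GDE GDE :=
  (1 / (2 * x 1)) • pd 1 - (c A) • X1 - X2

theorem X1_c (r) : X1 (c r) = 0 := by simp [X1, pd_c]
theorem X2_c (r) : X2 (c r) = 0 := by simp [X2, pd_c]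
theorem X3_c (A r) : X3 A (c r) = 0 := by simp [X3, X1_c, X2_c, pd_c]
theorem X1_0 : X1 (x 0) = 1 / (2 * x 0) := by simp [X1, pd_x_same]
theorem X1_1 : X1 (x 1) = 0 := by simp [X1, pd_x_ne]
theorem X1_2 : X1 (x 2) = 0 := by simp [X1, pd_x_ne]
theorem X2_0 : X2 (x 0) = 0 := by simp [X2, pd_x_ne]
theorem X2_1 : X2 (x 1) = 0 := by simp [X2, pd_x_ne]
theorem X2_2 : X2 (x 2) = 1 / (2 * x 2) := by simp [X2, pd_x_same]
theorem X3_0 (A) : X3 A (x 0) = - c A / (2 * x 0) := by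
  simp [X3, pd_x_ne, X1_0, X2_0]; ring
theorem X3_1 (A) : X3 A (x 1) = 1 / (2 * x 1) := by
  simp [X3, pd_x_same, X1_1, X2_1]
theorem X3_2 (A) : X3 A (x 2) = - 1 / (2 * x 2) := by
  simp [X3, pd_x_ne, X1_2, X2_2]; ring

theorem der_two (D : Derivation ℤ GDE GDE) : D 2 = 0 := by
  have : (2 : GDE) = ((2 : ℤ) : GDE) := by norm_num
  rw [this]; exact D.map_intCast 2

theorem comm13 (A : ℝ) (u : GDE) : X1 (X3 A u) = X3 A (X1 u) := by
  have h : ⁅X1, X3 A⁆ = 0 := by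
    apply der_ext
    · intro r; simp [Derivation.commutator_apply, X1_c, X3_c]
    · intro i
      have h0 := x_ne 0
      have h1 := x_ne 1
      have h2 := x_ne 2
      fin_cases i
      · simp [Derivation.commutator_apply, X1_0, X3_0, Derivation.leibniz_div, X1_c, X3_c, der_two, Derivation.leibniz, Derivation.leibniz_inv]
        field_simp
        ring
      · simp [Derivation.commutator_apply, X1_1, X3_1, Derivation.leibniz_div, X1_c, X3_c, der_two, Derivation.leibniz, Derivation.leibniz_inv]
      · simp [Derivation.commutator_apply, X1_2, X3_2, Derivation.leibniz_div, X1_c, X3_c, der_two, Derivation.leibniz, Derivation.leibniz_inv]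
  have := congrArg (fun D : Derivation ℤ GDE GDE => D u) h
  simpa [Derivation.commutator_apply, sub_eq_zero] using this

theorem comm23 (A : ℝ) (u : GDE) : X2 (X3 A u) = X3 A (X2 u) := by
  have h : ⁅X2, X3 A⁆ = 0 := by
    apply der_ext
    · intro r; simp [Derivation.commutator_apply, X2_c, X3_c]
    · intro i
      have h0 := x_ne 0
      have h1 := x_ne 1
      have h2 := x_ne 2
      fin_cases i
      · simp [Derivation.commutator_apply, X2_0, X3_0, Derivation.leibniz_div, X2_c, X3_c, der_two, Derivation.leibniz, Derivation.leibniz_inv]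
      · simp [Derivation.commutator_apply, X2_1, X3_1, Derivation.leibniz_div, X2_c, X3_c, der_two, Derivation.leibniz, Derivation.leibniz_inv]
      · simp [Derivation.commutator_apply, X2_2, X3_2, Derivation.leibniz_div, X2_c, X3_c, der_two, Derivation.leibniz, Derivation.leibniz_inv]
        field_simp
        ring
  have := congrArg (fun D : Derivation ℤ GDE GDE => D u) h
  simpa [Derivation.commutator_apply, sub_eq_zero] using this

theorem comm12 (u : GDE) : X1 (X2 u) = X2 (X1 u) := by
  have h : ⁅X1, X2⁆ = 0 := by
    apply der_ext
    · intro r; simp [Derivation.commutator_apply, X2_c, X1_c]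
    · intro i
      fin_cases i
      · simp [Derivation.commutator_apply, X2_0, X1_0, Derivation.leibniz_div, X2_c, X1_c, der_two, Derivation.leibniz, Derivation.leibniz_inv]
      · simp [Derivation.commutator_apply, X2_1, X1_1, Derivation.leibniz_div, X2_c, X1_c, der_two, Derivation.leibniz, Derivation.leibniz_inv]
      · simp [Derivation.commutator_apply, X2_2, X1_2, Derivation.leibniz_div, X2_c, X1_c, der_two, Derivation.leibniz, Derivation.leibniz_inv]
  have := congrArg (fun D : Derivation ℤ GDE GDE => D u) h
  simpa [Derivation.commutator_apply, sub_eq_zero] using this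

theorem poly_ne (f : GDR) (v : Fin 3 → ℝ) (h : eval v f ≠ 0) : algebraMap GDR GDE f ≠ 0 := by
  intro h0
  apply h
  have : f = 0 := alg_eq_zero h0
  simp [this]

/-- all signs -/
theorem sg (s : Fin 3 → ℝ) (h0 : s 0 * s 0 = 1) (h1 : s 1 * s 1 = 1) (h2 : s 2 * s 2 = 1) :
    ∀ i, s i * s i = 1 := by
  intro i; fin_cases i <;> assumption

/-- The total sign change. -/
noncomputable def tauM : GDE →+* GDE :=
  tau ![-1, -1, -1] (sg _ (by simp) (by simp) (by simp))

/-- concrete data -/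
noncomputable def data (A : ℝ) (hA : 0 < A) : GDData GDE where
  d := X3 A
  x := x 0
  y := x 1
  z := x 2
  a := c A
  tx := tau ![-1, 1, 1] (sg _ (by simp) (by simp) (by simp))
  ty := tau ![1, -1, 1] (sg _ (by simp) (by simp) (by simp))
  tz := tau ![1, 1, -1] (sg _ (by simp) (by simp) (by simp))
  tm := tauM
  hx := x_ne 0
  hy := x_ne 1
  hz := x_ne 2
  ha := fun h => hA.ne' (c_inj h)
  dx := X3_0 A
  dy := X3_1 A
  dz := X3_2 A
  da := X3_c A A
  txa := tau_c _ _ _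
  tya := tau_c _ _ _
  tza := tau_c _ _ _
  tma := tau_c _ _ _
  txx := by simp [tau_x, c_neg, c_one]
  txy := by simp [tau_x, c_neg, c_one]
  txz := by simp [tau_x, c_neg, c_one]
  tyx := by simp [tau_x, c_neg, c_one]
  tyy := by simp [tau_x, c_neg, c_one]
  tyz := by simp [tau_x, c_neg, c_one]
  tzx := by simp [tau_x, c_neg, c_one]
  tzy := by simp [tau_x, c_neg, c_one]
  tzz := by simp [tau_x, c_neg, c_one]
  tmx := by simp [tauM, tau_x, c_neg, c_one]
  tmy := by simp [tauM, tau_x, c_neg, c_one]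
  tmz := by simp [tauM, tau_x, c_neg, c_one]
  hI1 := by
    have := poly_ne (X 0 ^ 2 + C A * X 1 ^ 2) ![1, 0, 0] (by simp)
    simpa [x, c] using this
  hI2 := by
    have := poly_ne (X 1 ^ 2 + X 2 ^ 2) ![0, 1, 0] (by simp)
    simpa [x, c] using this
  hI12 := by
    have := poly_ne (X 0 ^ 2 - C A * X 2 ^ 2) ![1, 0, 0] (by simp)
    simpa [x, c] using this
  gen := by
    intro F h h0 h1 h2
    refine gen0 F (fun r => h _ (X3_c A r) (tau_c _ _ _) (tau_c _ _ _) (tau_c _ _ _)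
      (tau_c _ _ _)) ?_
    intro i
    fin_cases i
    exacts [h0, h1, h2]
end GDE

open MvPolynomial

namespace GDE

theorem tm_odd {A : ℝ} (hA : 0 < A) {u : GDE} (h : u ∈ (data A hA).K) (h' : tauM u = -u) :
    u = 0 := by
  have h1 : tauM u = u := h.2.2.2.2
  have : (2 : GDE) * u = 0 := by linear_combination h' - h1
  simpa using this

set_option maxHeartbeats 1000000 in
theorem order_step (A Cc σ Ra : ℝ) (hA : 0 < A) (hC : 0 < Cc) (hσ : 0 < σ) (hRa : 0 < Ra)
    (P Q R T : ℤ → GDE)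
    (hT1 : ∀ j, X1 (T j) = j * P j) (hT2 : ∀ j, X2 (T j) = j * Q j)
    (hT3 : ∀ j, X3 A (T j) = j * R j)
    (h12 : ∀ j, X1 (Q j) = X2 (P j)) (h13 : ∀ j, X3 A (P j) = X1 (R j))
    (h23 : ∀ j, X3 A (Q j) = X2 (R j))
    (hE : ∀ j, 2 * (x 0 ^ 2 + c A * x 1 ^ 2) * P j + 2 * (x 1 ^ 2 + x 2 ^ 2) * Q j
      + 2 * x 1 ^ 2 * R j = - T j)
    (hodd : tauM (T (-1)) = - T (-1))
    (heq : ∀ j, -2 * (x 0 * x 1 * x 2) * R j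
      + (2 * c Cc * x 0 * x 2 - 2 * c σ * x 0 ^ 2 - 2 * c A * x 1 ^ 2) * P (j - 1)
      - 2 * (x 1 ^ 2 + x 2 ^ 2) * Q (j - 1) - 2 * x 1 ^ 2 * R (j - 1)
      + 2 * c Ra * x 1 * (R (j - 2) + c A * P (j - 2) + Q (j - 2)) = 0)
    (k : ℤ) (hk : ∀ j < k, P j = 0 ∧ Q j = 0 ∧ R j = 0) :
    P k = 0 ∧ Q k = 0 ∧ R k = 0 := by
  have hx0 := x_ne 0
  have hx1 := x_ne 1
  have hx2 := x_ne 2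
  set G := data A hA with hG
  have hI1 : x 0 ^ 2 + c A * x 1 ^ 2 ≠ 0 := G.hI1
  have hI2 : x 1 ^ 2 + x 2 ^ 2 ≠ 0 := G.hI2
  have mI1 : x 0 ^ 2 + c A * x 1 ^ 2 ∈ G.K := G.I1_mem
  have mI2 : x 1 ^ 2 + x 2 ^ 2 ∈ G.K := G.I2_mem
  have mc : ∀ r, c r ∈ G.K := fun r => G.ker_mem _ (X3_c A r)
  have m2 : (2 : GDE) ∈ G.K := ofNat_mem G.K 2
  have mz := G.K.zero_mem
  obtain ⟨p1, q1, r1⟩ := hk (k - 1) (by omega)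
  obtain ⟨p2, q2, r2⟩ := hk (k - 2) (by omega)
  have hRk : R k = 0 := by
    have := heq k
    rw [p1, q1, r1, p2, q2, r2] at this
    have h2 : -2 * (x 0 * x 1 * x 2) * R k = 0 := by linear_combination this
    simpa [hx0, hx1, hx2] using h2
  have hP : P k ∈ G.K := G.ker_mem _ (by
    change X3 A (P k) = 0
    rw [h13, hRk, map_zero])
  have hQ : Q k ∈ G.K := G.ker_mem _ (by
    change X3 A (Q k) = 0
    rw [h23, hRk, map_zero])
  by_cases hk1 : k = -1
  · subst hk1
    have hTm : T (-1) ∈ G.K := G.ker_mem _ (by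
      change X3 A (T (-1)) = 0
      rw [hT3, hRk, mul_zero])
    have hT0 := tm_odd hA hTm hodd
    have e1 := hT1 (-1)
    have e2 := hT2 (-1)
    rw [hT0, map_zero] at e1 e2
    refine ⟨?_, ?_, hRk⟩
    · simpa using e1.symm
    · simpa using e2.symm
  have hH : ∀ j : ℤ, j ≠ 0 → X3 A (T j * ((j : GDE))⁻¹) = R j := by
    intro j hj
    have hj' : (j : GDE) ≠ 0 := by exact_mod_cast hj
    rw [Derivation.leibniz, Derivation.leibniz_inv, Derivation.map_intCast, hT3]
    simp only [smul_eq_mul]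
    field_simp
    ring
  have key1 := G.main_decomp (T (k+1) * (((k + 1 : ℤ) : GDE))⁻¹)
    (-2 * c σ * (x 0 ^ 2 + c A * x 1 ^ 2) * P k - 2 * (x 1 ^ 2 + x 2 ^ 2) * Q k) 0
    (2 * c Cc * P k) 0 (2 * c A * (c σ - 1) * P k)
    (G.K.sub_mem (G.K.mul_mem (G.K.mul_mem (G.K.mul_mem (G.K.neg_mem m2) (mc _)) mI1) hP)
      (G.K.mul_mem (G.K.mul_mem m2 mI2) hQ)) mz
    (G.K.mul_mem (G.K.mul_mem m2 (mc _)) hP) mz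
    (G.K.mul_mem (G.K.mul_mem (G.K.mul_mem m2 (mc _)) (G.K.sub_mem (mc _) G.K.one_mem)) hP)
    (by
      change -2 * (x 0 * x 1 * x 2) * X3 A _ + _ + _ * x 1 ^ 2 + _ * x 1 + _ * (x 0 * x 2)
        + _ * (x 0 * x 1 * x 2) = 0
      rw [hH _ (by omega)]
      have := heq (k + 1)
      rw [show k + 1 - 1 = k by ring, show k + 1 - 2 = k - 1 by ring, p1, q1, r1, hRk] at this
      linear_combination this)
  obtain ⟨e0, eb, -, -⟩ := key1
  have hPne : P k = 0 → Q k = 0 := by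
    intro h
    rw [h] at e0
    have : 2 * (x 1 ^ 2 + x 2 ^ 2) * Q k = 0 := by linear_combination -e0
    simpa [hI2] using this
  suffices h : P k = 0 from ⟨h, hPne h, hRk⟩
  have hcA : c A ≠ 0 := fun h => hA.ne' (c_inj h)
  have hcC : c Cc ≠ 0 := fun h => hC.ne' (c_inj h)
  by_cases hs : σ = 1
  swap
  · have : c σ - 1 ≠ 0 := by
      intro h
      apply hs
      have : c (σ - 1) = 0 := by
        rw [sub_eq_add_neg, c_add, c_neg, c_one]; linear_combination h
      linarith [c_inj this]
    simpa [this, hcA] using eb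
  subst hs
  rw [c_one] at e0 eb heq
  have e0' : (x 0 ^ 2 + c A * x 1 ^ 2) * P k + (x 1 ^ 2 + x 2 ^ 2) * Q k = 0 := by
    have : (2 : GDE) * ((x 0 ^ 2 + c A * x 1 ^ 2) * P k + (x 1 ^ 2 + x 2 ^ 2) * Q k) = 0 := by
      linear_combination -e0
    simpa using this
  by_cases hk0 : k = 0
  swap
  · have hTk : T k = 0 := by
      have := hE k
      rw [hRk] at this
      linear_combination this - 2 * e0'
    have := hT1 k
    rw [hTk, map_zero] at this
    have hk' : (k : GDE) ≠ 0 := by exact_mod_cast hk0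
    simpa [hk'] using this.symm
  subst hk0
  -- the resonant case
  have hR1 : R 1 = c Cc * P 0 / x 1 := by
    have := heq 1
    norm_num at this
    rw [show (-1 : ℤ) = 0 - 1 by ring, p1, q1, r1, hRk] at this
    rw [eq_div_iff hx1]
    have h2 : 2 * (x 0 * x 2) * (R 1 * x 1 - c Cc * P 0) = 0 := by
      linear_combination -this - 2 * e0'
    have : R 1 * x 1 - c Cc * P 0 = 0 := by simpa [hx0, hx2] using h2
    linear_combination this
  have hX1P : X1 (P 0) ∈ G.K := G.ker_mem _ (by
    change X3 A (X1 (P 0)) = 0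
    rw [← comm13, h13, hRk, map_zero, map_zero])
  have hX2P : X2 (P 0) ∈ G.K := G.ker_mem _ (by
    change X3 A (X2 (P 0)) = 0
    rw [← comm23, h13, hRk, map_zero, map_zero])
  have hp : P 1 - 2 * c Cc * X1 (P 0) * x 1 ∈ G.K := G.ker_mem _ (by
    change X3 A (P 1 - 2 * c Cc * X1 (P 0) * x 1) = 0
    have : X3 A (X1 (P 0)) = 0 := hX1P.1
    simp only [map_sub, Derivation.leibniz, smul_eq_mul, this, X3_1, X3_c, der_two, h13, hR1,
      Derivation.leibniz_div, X1_c, X1_1]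
    field_simp
    ring)
  have hq : Q 1 - 2 * c Cc * X2 (P 0) * x 1 ∈ G.K := G.ker_mem _ (by
    change X3 A (Q 1 - 2 * c Cc * X2 (P 0) * x 1) = 0
    have : X3 A (X2 (P 0)) = 0 := hX2P.1
    simp only [map_sub, Derivation.leibniz, smul_eq_mul, this, X3_1, X3_c, der_two, h23, hR1,
      Derivation.leibniz_div, X2_c, X2_1]
    field_simp
    ring)
  set p := P 1 - 2 * c Cc * X1 (P 0) * x 1 with hpd
  set q := Q 1 - 2 * c Cc * X2 (P 0) * x 1 with hqd
  have hP1 : P 1 = 2 * c Cc * X1 (P 0) * x 1 + p := by rw [hpd]; ring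
  have hQ1 : Q 1 = 2 * c Cc * X2 (P 0) * x 1 + q := by rw [hqd]; ring
  have euler : (x 0 ^ 2 + c A * x 1 ^ 2) * X1 (P 0) + (x 1 ^ 2 + x 2 ^ 2) * X2 (P 0) = - P 0 := by
    have := congrArg X1 e0'
    simp only [map_add, Derivation.leibniz, smul_eq_mul, map_zero, h12, pow_two, X1_0, X1_1, X1_2,
      X1_c] at this
    have h2 : x 0 * (1 / (2 * x 0)) = 1 / 2 := by field_simp
    linear_combination this - 2 * P 0 * h2
  have key2 := G.main_decomp (T 2 * (((2 : ℤ) : GDE))⁻¹)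
    (-2 * (x 0 ^ 2 + c A * x 1 ^ 2) * p - 2 * (x 1 ^ 2 + x 2 ^ 2) * q)
    (2 * ((c Cc + c A * c Ra) * P 0 + c Ra * Q 0))
    (2 * c Cc * p) (4 * c Cc ^ 2 * X1 (P 0)) 0
    (G.K.sub_mem (G.K.mul_mem (G.K.mul_mem (G.K.neg_mem m2) mI1) hp)
      (G.K.mul_mem (G.K.mul_mem m2 mI2) hq))
    (G.K.mul_mem m2 (G.K.add_mem (G.K.mul_mem (G.K.add_mem (mc _) (G.K.mul_mem (mc _) (mc _))) hP)
      (G.K.mul_mem (mc _) hQ)))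
    (G.K.mul_mem (G.K.mul_mem m2 (mc _)) hp)
    (G.K.mul_mem (G.K.mul_mem (ofNat_mem G.K 4) (G.K.pow_mem (mc _) 2)) hX1P) mz
    (by
      change -2 * (x 0 * x 1 * x 2) * X3 A _ + _ + _ * x 1 ^ 2 + _ * x 1 + _ * (x 0 * x 2)
        + _ * (x 0 * x 1 * x 2) = 0
      rw [hH _ (by norm_num)]
      have := heq 2
      norm_num at this
      rw [hP1, hQ1, hRk] at this
      have hh : x 1 ^ 2 * R 1 = c Cc * P 0 * x 1 := by rw [hR1]; field_simp
      linear_combination this + 2 * hh + 4 * c Cc * x 1 * euler)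
  obtain ⟨-, -, e1, -⟩ := key2
  have e1' : (c Cc + c A * c Ra) * P 0 + c Ra * Q 0 = 0 := by simpa using e1
  have hdet : (c Cc + c A * c Ra) * (x 1 ^ 2 + x 2 ^ 2) - c Ra * (x 0 ^ 2 + c A * x 1 ^ 2) ≠ 0 := by
    have := poly_ne ((C Cc + C A * C Ra) * (X 1 ^ 2 + X 2 ^ 2) - C Ra * (X 0 ^ 2 + C A * X 1 ^ 2))
      ![1, 0, 0] (by simp [hRa.ne'])
    simpa [x, c] using this
  have : ((c Cc + c A * c Ra) * (x 1 ^ 2 + x 2 ^ 2) - c Ra * (x 0 ^ 2 + c A * x 1 ^ 2)) * P 0 = 0 := by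
    linear_combination (x 1 ^ 2 + x 2 ^ 2) * e1' - c Ra * e0'
  exact (mul_eq_zero.mp this).resolve_left hdet

end GDE

open MvPolynomial

namespace GDE
open GDL

/-- Laurent series -/
abbrev LL := HahnSeries ℤ GDE

/-- coefficientwise lift -/
noncomputable def lift (δ : Derivation ℤ GDE GDE) : LL →+ LL :=
  cmap (fun _ => δ.toLinearMap.toAddMonoidHom)
/-- the operator ε d/dε -/
noncomputable def eps : LL →+ LL := cmap (fun n => AddMonoidHom.mulLeft (n : GDE))
/-- sign change -/
noncomputable def iota : LL →+ LL :=
  cmap (fun n => (AddMonoidHom.mulLeft ((-1 : GDE) ^ n)).comp tauM.toAddMonoidHom)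

theorem lift_coeff (δ : Derivation ℤ GDE GDE) (u : LL) (n : ℤ) :
    (lift δ u).coeff n = δ (u.coeff n) := rfl
theorem eps_coeff (u : LL) (n : ℤ) : (eps u).coeff n = n * u.coeff n := rfl
theorem iota_coeff (u : LL) (n : ℤ) : (iota u).coeff n = (-1) ^ n * tauM (u.coeff n) := rfl
theorem lift_single (δ : Derivation ℤ GDE GDE) (n : ℤ) (a : GDE) :
    lift δ (HahnSeries.single n a) = HahnSeries.single n (δ a) := cmap_single _ _ _
theorem eps_single (n : ℤ) (a : GDE) :
    eps (HahnSeries.single n a) = HahnSeries.single n (n * a) := cmap_single _ _ _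
theorem iota_single (n : ℤ) (a : GDE) :
    iota (HahnSeries.single n a) = HahnSeries.single n ((-1) ^ n * tauM a) := cmap_single _ _ _

theorem lift_der (δ : Derivation ℤ GDE GDE) : IsDer (lift δ) := by
  apply cmap_der
  intro i j a b
  change δ (a * b) = a * δ b + b * δ a
  simp

theorem eps_der : IsDer eps := by
  apply cmap_der
  intro i j a b
  change ((i + j : ℤ) : GDE) * (a * b) = a * (j * b) + b * (i * a)
  push_cast
  ring

theorem iota_mul (u v : LL) : iota (u * v) = iota u * iota v := by
  apply cmap_mul
  intro i j a b
  change (-1 : GDE) ^ (i + j) * tauM (a * b) = (-1) ^ i * tauM a * ((-1) ^ j * tauM b)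
  rw [zpow_add₀ (by norm_num), map_mul]
  ring

theorem iota_one : iota 1 = 1 := by
  change iota (HahnSeries.single 0 1) = HahnSeries.single 0 1
  rw [iota_single]; simp

theorem iota_inv (u : LL) (hu : u ≠ 0) : iota u⁻¹ = (iota u)⁻¹ := by
  apply eq_inv_of_mul_eq_one_left
  rw [← iota_mul, inv_mul_cancel₀ hu, iota_one]

theorem iota_eps (u : LL) : iota (eps u) = eps (iota u) := by
  ext n
  rw [iota_coeff, eps_coeff, eps_coeff, iota_coeff, map_mul, map_intCast]
  ring

theorem lift_eps (δ : Derivation ℤ GDE GDE) (u : LL) : lift δ (eps u) = eps (lift δ u) := by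
  ext n
  rw [lift_coeff, eps_coeff, eps_coeff, lift_coeff, Derivation.leibniz, Derivation.map_intCast]
  simp

theorem lift_comm (δ δ' : Derivation ℤ GDE GDE) (h : ∀ u, δ (δ' u) = δ' (δ u)) (u : LL) :
    lift δ (lift δ' u) = lift δ' (lift δ u) := by
  ext n
  exact h _

/-- The substitution homomorphism. -/
noncomputable def Th : GDR →+* LL :=
  eval₂Hom ((HahnSeries.C).comp ((algebraMap GDR GDE).comp (C : ℝ →+* GDR)))
    (fun i => HahnSeries.single (-1) (x i))

theorem Th_C (r : ℝ) : Th (C r) = HahnSeries.single 0 (c r) := by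
  change eval₂Hom _ _ (C r) = _
  rw [eval₂Hom_C]; rfl
theorem Th_X (i : Fin 3) : Th (X i) = HahnSeries.single (-1) (x i) := by
  change eval₂Hom _ _ (X i) = _
  rw [eval₂Hom_X']

theorem Th_mono1 (m : Fin 3 →₀ ℕ) :
    Th (monomial m 1) = HahnSeries.single (-(m.degree : ℤ)) (algebraMap GDR GDE (monomial m 1)) := by
  induction m using Finsupp.induction_linear with
  | zero =>
    have := Th_C 1
    simpa [c] using this
  | add a b ha hb =>
    have : (monomial (a + b) (1 : ℝ) : GDR) = monomial a 1 * monomial b 1 := by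
      rw [monomial_mul, one_mul]
    rw [this, map_mul, ha, hb, HahnSeries.single_mul_single, map_mul (algebraMap GDR GDE), map_add]
    congr 2
    push_cast; ring
  | single i n =>
    rw [← X_pow_eq_monomial, map_pow, Th_X, HahnSeries.single_pow, map_pow (algebraMap GDR GDE)]
    simp [x]

theorem Th_mono (m : Fin 3 →₀ ℕ) (r : ℝ) :
    Th (monomial m r) = HahnSeries.single (-(m.degree : ℤ)) (algebraMap GDR GDE (monomial m r)) := by
  have : (monomial m r : GDR) = C r * monomial m 1 := by rw [C_mul_monomial, mul_one]
  rw [this, map_mul, Th_C, Th_mono1, HahnSeries.single_mul_single, map_mul (algebraMap GDR GDE), zero_add]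
  rfl

theorem Th_coeff (f : GDR) (k : ℕ) :
    (Th f).coeff (-(k : ℤ)) = algebraMap GDR GDE (homogeneousComponent k f) := by
  induction f using MvPolynomial.induction_on' with
  | monomial m r =>
    rw [Th_mono, HahnSeries.coeff_single, homogeneousComponent_of_mem (n := m.degree)
      (isHomogeneous_monomial r rfl)]
    simp only [neg_inj, Nat.cast_inj]
    split_ifs <;> simp
  | add p q hp hq => rw [map_add, HahnSeries.coeff_add, hp, hq, map_add, map_add]

theorem Th_inj {f : GDR} (h : Th f = 0) : f = 0 := by
  rw [← sum_homogeneousComponent f]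
  apply Finset.sum_eq_zero
  intro k _
  apply alg_eq_zero
  rw [← Th_coeff, h]; rfl

theorem iota_Th (f : GDR) : iota (Th f) = Th f := by
  induction f using MvPolynomial.induction_on with
  | C r => 
    rw [Th_C, iota_single, tauM, tau_c]; simp
  | add p q hp hq => rw [map_add, map_add, hp, hq]
  | mul_X p i hp =>
    rw [map_mul, iota_mul, hp, Th_X, iota_single, tauM, tau_x]
    congr 2
    fin_cases i <;> simp [c_neg, c_one]

/-- derivations along `Th` -/
def ThDer (φ : GDR → LL) : Prop :=
  (∀ f g, φ (f + g) = φ f + φ g) ∧ (∀ f g, φ (f * g) = Th f * φ g + Th g * φ f)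

theorem ThDer.ext {φ ψ : GDR → LL} (hφ : ThDer φ) (hψ : ThDer ψ) (hC : ∀ r, φ (C r) = ψ (C r))
    (hX : ∀ i, φ (X i) = ψ (X i)) (f : GDR) : φ f = ψ f := by
  induction f using MvPolynomial.induction_on with
  | C r => exact hC r
  | add p q hp hq => rw [hφ.1, hψ.1, hp, hq]
  | mul_X p i hp => rw [hφ.2, hψ.2, hp, hX]

theorem ThDer.add {φ ψ : GDR → LL} (hφ : ThDer φ) (hψ : ThDer ψ) : ThDer (fun f => φ f + ψ f) :=
  ⟨fun f g => by simp only [hφ.1, hψ.1]; ring, fun f g => by simp only [hφ.2, hψ.2]; ring⟩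
theorem ThDer.smul {φ : GDR → LL} (hφ : ThDer φ) (a : LL) : ThDer (fun f => a * φ f) :=
  ⟨fun f g => by simp only [hφ.1]; ring, fun f g => by simp only [hφ.2]; ring⟩
theorem ThDer.of {D : LL →+ LL} (hD : IsDer D) : ThDer (fun f => D (Th f)) :=
  ⟨fun f g => by simp, fun f g => by simp only [map_mul]; exact hD _ _⟩
theorem ThDer.der (δ : Derivation ℝ GDR GDR) : ThDer (fun f => Th (δ f)) :=
  ⟨fun f g => by simp, fun f g => by simp⟩

theorem sadd (n : ℤ) (a b : GDE) : (HahnSeries.single n a : LL) + HahnSeries.single n b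
    = HahnSeries.single n (a + b) := (HahnSeries.single_add n a b).symm

theorem Th_pd0 (f : GDR) : Th (pderiv 0 f) = HahnSeries.single 1 (2 * x 0) * lift X1 (Th f) := by
  have h0 := x_ne 0
  revert f
  refine ThDer.ext (ThDer.der _) ((ThDer.of (lift_der X1)).smul _) ?_ ?_
  · intro r
    simp [Th_C, lift_single, X1_c]
  · intro j
    simp only [Th_X, lift_single, HahnSeries.single_mul_single]
    have o : (1 : LL) = HahnSeries.single (1 + -1 : ℤ) 1 := rfl
    fin_cases j
    · change Th (pderiv 0 (X 0)) = HahnSeries.single (1 + -1) (2 * x 0 * X1 (x 0))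
      rw [pderiv_X_self, map_one, o, X1_0]
      congr 1
      field_simp
    · change Th (pderiv 0 (X 1)) = HahnSeries.single (1 + -1) (2 * x 0 * X1 (x 1))
      rw [pderiv_X_of_ne (by decide), X1_1]
      simp
    · change Th (pderiv 0 (X 2)) = HahnSeries.single (1 + -1) (2 * x 0 * X1 (x 2))
      rw [pderiv_X_of_ne (by decide), X1_2]
      simp

theorem Th_pd2 (f : GDR) : Th (pderiv 2 f) = HahnSeries.single 1 (2 * x 2) * lift X2 (Th f) := by
  have h0 := x_ne 2
  revert f
  refine ThDer.ext (ThDer.der _) ((ThDer.of (lift_der X2)).smul _) ?_ ?_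
  · intro r
    simp [Th_C, lift_single, X2_c]
  · intro j
    simp only [Th_X, lift_single, HahnSeries.single_mul_single]
    have o : (1 : LL) = HahnSeries.single (1 + -1 : ℤ) 1 := rfl
    fin_cases j
    · change Th (pderiv 2 (X 0)) = HahnSeries.single (1 + -1) (2 * x 2 * X2 (x 0))
      rw [pderiv_X_of_ne (by decide), X2_0]
      simp
    · change Th (pderiv 2 (X 1)) = HahnSeries.single (1 + -1) (2 * x 2 * X2 (x 1))
      rw [pderiv_X_of_ne (by decide), X2_1]
      simp
    · change Th (pderiv 2 (X 2)) = HahnSeries.single (1 + -1) (2 * x 2 * X2 (x 2))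
      rw [pderiv_X_self, map_one, o, X2_2]
      congr 1
      field_simp

theorem Th_pd1 (A : ℝ) (f : GDR) : Th (pderiv 1 f) =
    HahnSeries.single 1 (2 * c A * x 1) * lift X1 (Th f)
    + HahnSeries.single 1 (2 * x 1) * lift X2 (Th f)
    + HahnSeries.single 1 (2 * x 1) * lift (X3 A) (Th f) := by
  have h0 := x_ne 0
  have h1 := x_ne 1
  have h2 := x_ne 2
  revert f
  refine ThDer.ext (ThDer.der _) ((((ThDer.of (lift_der X1)).smul _).add
    ((ThDer.of (lift_der X2)).smul _)).add ((ThDer.of (lift_der (X3 A))).smul _)) ?_ ?_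
  · intro r
    simp [Th_C, lift_single, X1_c, X2_c, X3_c]
  · intro j
    simp only [Th_X, lift_single, HahnSeries.single_mul_single, sadd]
    have o : (1 : LL) = HahnSeries.single (1 + -1 : ℤ) 1 := rfl
    have o' : (0 : LL) = HahnSeries.single (1 + -1 : ℤ) 0 := by simp
    fin_cases j
    · change Th (pderiv 1 (X 0)) = HahnSeries.single (1 + -1) (2 * c A * x 1 * X1 (x 0)
        + 2 * x 1 * X2 (x 0) + 2 * x 1 * X3 A (x 0))
      rw [pderiv_X_of_ne (by decide), X1_0, X2_0, X3_0, map_zero, o']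
      congr 1
      field_simp
      ring
    · change Th (pderiv 1 (X 1)) = HahnSeries.single (1 + -1) (2 * c A * x 1 * X1 (x 1)
        + 2 * x 1 * X2 (x 1) + 2 * x 1 * X3 A (x 1))
      rw [pderiv_X_self, X1_1, X2_1, X3_1, map_one, o]
      congr 1
      field_simp
      ring
    · change Th (pderiv 1 (X 2)) = HahnSeries.single (1 + -1) (2 * c A * x 1 * X1 (x 2)
        + 2 * x 1 * X2 (x 2) + 2 * x 1 * X3 A (x 2))
      rw [pderiv_X_of_ne (by decide), X1_2, X2_2, X3_2, map_zero, o']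
      congr 1
      field_simp
      ring

theorem Th_euler (f : GDR) : eps (Th f) = (-Th (X 0)) * Th (pderiv 0 f) + (-Th (X 1)) * Th (pderiv 1 f)
    + (-Th (X 2)) * Th (pderiv 2 f) := by
  revert f
  refine ThDer.ext (ThDer.of eps_der) ((((ThDer.der (pderiv 0)).smul _).add
    ((ThDer.der (pderiv 1)).smul _)).add ((ThDer.der (pderiv 2)).smul _)) ?_ ?_
  · intro r
    simp [Th_C, eps_single]
  · intro j
    have : eps (Th (X j)) = - Th (X j) := by
      rw [Th_X, eps_single]; simp
    rw [this]
    fin_cases j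
    · simp only [Fin.zero_eta, Fin.mk_one, Fin.reduceFinMk, pderiv_X_self, pderiv_X_of_ne (show (0 : Fin 3) ≠ 1 by decide), pderiv_X_of_ne (show (0 : Fin 3) ≠ 2 by decide), map_one, map_zero]
      ring
    · simp only [Fin.zero_eta, Fin.mk_one, Fin.reduceFinMk, pderiv_X_self, pderiv_X_of_ne (show (1 : Fin 3) ≠ 0 by decide), pderiv_X_of_ne (show (1 : Fin 3) ≠ 2 by decide), map_one, map_zero]
      ring
    · simp only [Fin.zero_eta, Fin.mk_one, Fin.reduceFinMk, pderiv_X_self, pderiv_X_of_ne (show (2 : Fin 3) ≠ 0 by decide), pderiv_X_of_ne (show (2 : Fin 3) ≠ 1 by decide), map_one, map_zero]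
      ring

end GDE

open MvPolynomial

namespace GDE
open GDL
section
variable {p : ℕ} (f : Fin p → GDR) (lam : Fin p → ℝ) (g h : GDR)

/-- logarithmic derivative functional -/
noncomputable def Om (φ : GDR → LL) : LL :=
  ∑ i, HahnSeries.single 0 (c (lam i)) * (φ (f i) / Th (f i)) + (φ g * Th h - Th g * φ h) / Th h ^ 2

/-- polynomial numerator -/
noncomputable def Nn (δ : GDR → GDR) : GDR :=
  ∑ i, C (lam i) * δ (f i) * (∏ l ∈ Finset.univ.erase i, f l) * h ^ 2
    + (∏ i, f i) * (δ g * h - g * δ h)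

theorem Om_add (φ ψ : GDR → LL) : Om f lam g h (fun u => φ u + ψ u) = Om f lam g h φ + Om f lam g h ψ := by
  simp only [Om, add_div, mul_add, Finset.sum_add_distrib]
  ring

theorem Om_smul (a : LL) (φ : GDR → LL) : Om f lam g h (fun u => a * φ u) = a * Om f lam g h φ := by
  simp only [Om, mul_add, Finset.mul_sum]
  congr 1
  · exact Finset.sum_congr rfl fun i _ => by ring
  · ring


theorem Th_ne {u : GDR} (hu : u ≠ 0) : Th u ≠ 0 := fun h => hu (Th_inj h)

theorem Th_Nn (hf : ∀ i, f i ≠ 0) (hh : h ≠ 0) (δ : GDR → GDR) : Th (Nn f lam g h δ) =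
    (∏ i, Th (f i)) * Th h ^ 2 * Om f lam g h (fun u => Th (δ u)) := by
  have hH := Th_ne hh
  simp only [Nn, Om, map_add, map_sum, map_mul, map_sub, map_prod, map_pow, mul_add, Finset.mul_sum]
  congr 1
  · refine Finset.sum_congr rfl fun i _ => ?_
    rw [← Finset.mul_prod_erase Finset.univ _ (Finset.mem_univ i), Th_C]
    have := Th_ne (hf i)
    field_simp
  · field_simp

theorem Om_zero_iff (hf : ∀ i, f i ≠ 0) (hh : h ≠ 0) (δ : GDR → GDR) :
    Nn f lam g h δ = 0 ↔ Om f lam g h (fun u => Th (δ u)) = 0 := by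
  have hH := Th_ne hh
  have hP : ∏ i, Th (f i) ≠ 0 := Finset.prod_ne_zero_iff.mpr fun i _ => Th_ne (hf i)
  constructor
  · intro h0
    have := Th_Nn f lam g h hf hh δ
    rw [h0, map_zero] at this
    have := this.symm
    simpa [hP, hH] using this
  · intro h0
    apply Th_inj
    rw [Th_Nn f lam g h hf hh δ, h0, mul_zero]

theorem Om_comm (hf : ∀ i, f i ≠ 0) (hh : h ≠ 0) {D D' : LL →+ LL} (hD : IsDer D) (hD' : IsDer D')
    (hc : ∀ a, D (D' a) = D' (D a)) (h0 : ∀ r, D (HahnSeries.single 0 (c r)) = 0)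
    (h0' : ∀ r, D' (HahnSeries.single 0 (c r)) = 0) :
    D (Om f lam g h (fun u => D' (Th u))) = D' (Om f lam g h (fun u => D (Th u))) := by
  have hH := Th_ne hh
  simp only [Om, map_add, map_sum]
  congr 1
  · refine Finset.sum_congr rfl fun i _ => ?_
    rw [hD, hD', h0, h0', log_comm hD hD' hc (Th_ne (hf i))]
    simp
  · rw [← hD.div hH, ← hD'.div hH, hc]

theorem iota_div (u v : LL) (hv : v ≠ 0) : iota (u / v) = iota u / iota v := by
  rw [div_eq_mul_inv, iota_mul, iota_inv _ hv, div_eq_mul_inv]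

theorem iota_Om (hf : ∀ i, f i ≠ 0) (hh : h ≠ 0) : iota (Om f lam g h (fun u => eps (Th u))) = Om f lam g h (fun u => eps (Th u)) := by
  have hH := Th_ne hh
  have hc : ∀ r, iota (HahnSeries.single 0 (c r)) = HahnSeries.single 0 (c r) := by
    intro r
    rw [← Th_C, iota_Th]
  simp only [Om, map_add, map_sum, pow_two]
  congr 1
  · refine Finset.sum_congr rfl fun i _ => ?_
    rw [iota_mul, iota_div _ _ (Th_ne (hf i)), iota_eps, iota_Th, hc]
  · rw [iota_div _ _ (mul_ne_zero hH hH), map_sub, iota_mul, iota_mul, iota_mul, iota_eps, iota_eps,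
      iota_Th, iota_Th]

set_option maxHeartbeats 1000000 in
theorem alg_main (hf : ∀ i, f i ≠ 0) (hh : h ≠ 0) (A Cc σ Ra : ℝ) (hA : 0 < A) (hC : 0 < Cc) (hσ : 0 < σ) (hRa : 0 < Ra)
    (hN : Nn f lam g h (gdDeriv A Cc σ Ra) = 0) (i : Fin 3) : Nn f lam g h (pderiv i) = 0 := by
  set O1 := Om f lam g h (fun u => lift X1 (Th u)) with hO1
  set O2 := Om f lam g h (fun u => lift X2 (Th u)) with hO2
  set O3 := Om f lam g h (fun u => lift (X3 A) (Th u)) with hO3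
  set T := Om f lam g h (fun u => eps (Th u)) with hT
  have hp0 : Om f lam g h (fun u => Th (pderiv 0 u)) = HahnSeries.single 1 (2 * x 0) * O1 := by
    simp only [Th_pd0, Om_smul]; rfl
  have hp2 : Om f lam g h (fun u => Th (pderiv 2 u)) = HahnSeries.single 1 (2 * x 2) * O2 := by
    simp only [Th_pd2, Om_smul]; rfl
  have hp1 : Om f lam g h (fun u => Th (pderiv 1 u)) = HahnSeries.single 1 (2 * c A * x 1) * O1
      + HahnSeries.single 1 (2 * x 1) * O2 + HahnSeries.single 1 (2 * x 1) * O3 := by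
    simp only [Th_pd1 A, Om_smul, Om_add]; rfl
  have c0 : ∀ (δ : Derivation ℤ GDE GDE), (∀ r, δ (c r) = 0) →
      ∀ r, lift δ (HahnSeries.single 0 (c r)) = 0 := by
    intro δ hδ r
    rw [lift_single, hδ]; simp
  have e0 : ∀ r, eps (HahnSeries.single 0 (c r)) = 0 := by
    intro r
    rw [eps_single]; simp
  have hET : T = (-Th (X 0)) * (HahnSeries.single 1 (2 * x 0) * O1)
      + (-Th (X 1)) * (HahnSeries.single 1 (2 * c A * x 1) * O1
      + HahnSeries.single 1 (2 * x 1) * O2 + HahnSeries.single 1 (2 * x 1) * O3)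
      + (-Th (X 2)) * (HahnSeries.single 1 (2 * x 2) * O2) := by
    rw [← hp0, ← hp1, ← hp2, hT]
    simp only [Th_euler, Om_smul, Om_add]
  have hgd : Th (C A * X 1 * X 2 + C Cc * X 2 - C σ * X 0) * (HahnSeries.single 1 (2 * x 0) * O1)
      + Th (-(X 0 * X 2) + C Ra - X 1) * (HahnSeries.single 1 (2 * c A * x 1) * O1
      + HahnSeries.single 1 (2 * x 1) * O2 + HahnSeries.single 1 (2 * x 1) * O3)
      + Th (-X 2 + X 0 * X 1) * (HahnSeries.single 1 (2 * x 2) * O2) = 0 := by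
    rw [Om_zero_iff f lam g h hf hh] at hN
    simp only [gdDeriv, map_add Th, map_mul Th, Om_smul, Om_add, hp0, hp1, hp2] at hN
    simp only [map_add Th, map_mul Th]
    exact hN
  have key : ∀ k, O1.coeff k = 0 ∧ O2.coeff k = 0 ∧ O3.coeff k = 0 := by
    have step := order_step A Cc σ Ra hA hC hσ hRa O1.coeff O2.coeff O3.coeff T.coeff
      (fun j => congrArg (fun u : LL => u.coeff j)
        (Om_comm f lam g h hf hh (lift_der X1) eps_der (lift_eps X1) (c0 _ X1_c) e0))
      (fun j => congrArg (fun u : LL => u.coeff j)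
        (Om_comm f lam g h hf hh (lift_der X2) eps_der (lift_eps X2) (c0 _ X2_c) e0))
      (fun j => congrArg (fun u : LL => u.coeff j)
        (Om_comm f lam g h hf hh (lift_der (X3 A)) eps_der (lift_eps (X3 A)) (c0 _ (X3_c A)) e0))
      (fun j => congrArg (fun u : LL => u.coeff j)
        (Om_comm f lam g h hf hh (lift_der X1) (lift_der X2) (lift_comm X1 X2 comm12)
          (c0 _ X1_c) (c0 _ X2_c)))
      (fun j => (congrArg (fun u : LL => u.coeff j)
        (Om_comm f lam g h hf hh (lift_der X1) (lift_der (X3 A)) (lift_comm X1 (X3 A) (comm13 A))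
          (c0 _ X1_c) (c0 _ (X3_c A)))).symm)
      (fun j => (congrArg (fun u : LL => u.coeff j)
        (Om_comm f lam g h hf hh (lift_der X2) (lift_der (X3 A)) (lift_comm X2 (X3 A) (comm23 A))
          (c0 _ X2_c) (c0 _ (X3_c A)))).symm)
      (by
        intro j
        have := congrArg (fun u : LL => u.coeff j) hET
        simp only [Th_X, neg_mul, mul_add, HahnSeries.coeff_add, HahnSeries.coeff_neg,
          HahnSeries.coeff_single_mul] at this
        rw [show j - -1 - 1 = j by ring] at this
        linear_combination this)
      (by
        have := congrArg (fun u : LL => u.coeff (-1)) (iota_Om f lam g h hf hh)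
        rw [← hT] at this
        simp only [iota_coeff] at this
        rw [show ((-1 : GDE) ^ (-1 : ℤ)) = -1 by norm_num] at this
        linear_combination -this)
      (by
        intro j
        have := congrArg (fun u : LL => u.coeff (j - 1)) hgd
        simp only [map_add, map_sub, map_neg, map_mul, Th_X, Th_C, neg_mul, add_mul, sub_mul, mul_add, mul_assoc, HahnSeries.coeff_add, HahnSeries.coeff_neg, HahnSeries.coeff_sub,
          HahnSeries.coeff_single_mul, HahnSeries.coeff_zero] at this
        simp only [show j - 1 - 0 - -1 - -1 - 1 = j by ring, show j - 1 - 0 - -1 - 1 = j - 1 by ring,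
          show j - 1 - -1 - -1 - 1 = j by ring, show j - 1 - -1 - 1 = j - 1 by ring,
          show j - 1 - 0 - 1 = j - 2 by ring] at this
        linear_combination this)
    have hb : ∀ u : LL, ∃ N : ℤ, ∀ j < N, u.coeff j = 0 := fun u =>
      ⟨u.order, fun j hj => HahnSeries.coeff_eq_zero_of_lt_order hj⟩
    obtain ⟨N1, h1⟩ := hb O1
    obtain ⟨N2, h2⟩ := hb O2
    obtain ⟨N3, h3⟩ := hb O3
    set N := min N1 (min N2 N3) with hNd
    have ind : ∀ n : ℕ, ∀ j < N + n, O1.coeff j = 0 ∧ O2.coeff j = 0 ∧ O3.coeff j = 0 := by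
      intro n
      induction n with
      | zero =>
        intro j hj
        exact ⟨h1 j (by omega), h2 j (by omega), h3 j (by omega)⟩
      | succ n ih =>
        intro j hj
        apply step
        intro j' hj'
        exact ih j' (by push_cast at hj; omega)
    intro k
    exact ind (k - N + 1).toNat k (by omega)
  have z1 : O1 = 0 := by ext k; exact (key k).1
  have z2 : O2 = 0 := by ext k; exact (key k).2.1
  have z3 : O3 = 0 := by ext k; exact (key k).2.2
  rw [Om_zero_iff f lam g h hf hh]
  fin_cases i
  · change Om f lam g h (fun u => Th (pderiv 0 u)) = 0
    rw [hp0, z1, mul_zero]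
  · change Om f lam g h (fun u => Th (pderiv 1 u)) = 0
    rw [hp1, z1, z2, z3]; simp
  · change Om f lam g h (fun u => Th (pderiv 2 u)) = 0
    rw [hp2, z2, mul_zero]
end
end GDE

open MvPolynomial

namespace GDE

/-- differential of a polynomial -/
noncomputable def Dp (f : GDR) (q : Fin 3 → ℝ) : (Fin 3 → ℝ) →L[ℝ] ℝ :=
  ∑ j, eval q (pderiv j f) • (ContinuousLinearMap.proj j : (Fin 3 → ℝ) →L[ℝ] ℝ)

theorem Dp_apply (f : GDR) (q v : Fin 3 → ℝ) : Dp f q v = ∑ j, eval q (pderiv j f) * v j := by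
  simp [Dp]

theorem hasFDeriv_eval (f : GDR) (q : Fin 3 → ℝ) : HasFDerivAt (fun q => eval q f) (Dp f q) q := by
  induction f using MvPolynomial.induction_on with
  | C r =>
    simp only [eval_C, Dp, pderiv_C, map_zero, zero_smul, Finset.sum_const_zero]
    exact hasFDerivAt_const r q
  | add f g hf hg =>
    simp only [eval_add]
    refine (hf.add hg).congr_fderiv (ContinuousLinearMap.ext fun v => ?_)
    simp [Dp_apply, add_mul, Finset.sum_add_distrib]
  | mul_X f i hf =>
    simp only [eval_mul, eval_X]
    have hi : HasFDerivAt (fun q : Fin 3 → ℝ => q i)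
      (ContinuousLinearMap.proj i : (Fin 3 → ℝ) →L[ℝ] ℝ) q := (ContinuousLinearMap.proj i : (Fin 3 → ℝ) →L[ℝ] ℝ).hasFDerivAt
    refine (hf.mul hi).congr_fderiv (ContinuousLinearMap.ext fun v => Eq.symm ?_)
    simp only [Dp_apply, ContinuousLinearMap.add_apply, ContinuousLinearMap.smul_apply,
      ContinuousLinearMap.proj_apply, smul_eq_mul, Finset.mul_sum, Derivation.leibniz, map_add,
      map_mul, eval_X, add_mul, Finset.sum_add_distrib, pderiv_X]
    congr 1
    · rw [Finset.sum_eq_single i]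
      · simp
      · intro b _ hb
        simp [Pi.single_apply, hb.symm]
      · simp
    · exact Finset.sum_congr rfl fun j _ => by ring

section
variable {p : ℕ} (f : Fin p → GDR) (lam : Fin p → ℝ) (g h : GDR)

/-- logarithmic differential -/
noncomputable def dPsi (q v : Fin 3 → ℝ) : ℝ :=
  ∑ i, lam i * (Dp (f i) q v / eval q (f i))
    + (Dp g q v * eval q h - eval q g * Dp h q v) / eval q h ^ 2

theorem eval_Nn (δ : GDR → GDR) (q v : Fin 3 → ℝ) (hδ : ∀ u, eval q (δ u) = Dp u q v)
    (hf : ∀ i, eval q (f i) ≠ 0) (hh : eval q h ≠ 0) :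
    eval q (Nn f lam g h δ) = (∏ i, eval q (f i)) * eval q h ^ 2 * dPsi f lam g h q v := by
  simp only [Nn, dPsi, map_add, map_sum, map_mul, map_sub, map_prod, map_pow, mul_add,
    Finset.mul_sum, eval_C, hδ]
  congr 1
  · refine Finset.sum_congr rfl fun i _ => ?_
    rw [← Finset.mul_prod_erase Finset.univ _ (Finset.mem_univ i)]
    have := hf i
    field_simp
  · field_simp

theorem hasFDeriv_Phi (Φ : (Fin 3 → ℝ) → ℝ)
    (hΦ : ∀ q, Φ q = (∏ i, |eval q (f i)| ^ lam i) * Real.exp (eval q g / eval q h))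
    (q : Fin 3 → ℝ) (hf : ∀ i, eval q (f i) ≠ 0) (hh : eval q h ≠ 0) :
    ∃ L : (Fin 3 → ℝ) →L[ℝ] ℝ, HasFDerivAt Φ L q ∧
      ∀ v, L v = Φ q * dPsi f lam g h q v := by
  have cont : ∀ u : GDR, ContinuousAt (fun q => eval q u) q := fun u =>
    (hasFDeriv_eval u q).continuousAt
  have key : ∀ q, (∀ i, eval q (f i) ≠ 0) → Φ q =
      Real.exp (∑ i, lam i * Real.log (eval q (f i)) + eval q g * (eval q h)⁻¹) := by
    intro q hf
    rw [hΦ, Real.exp_add, Real.exp_sum, div_eq_mul_inv]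
    congr 1
    refine Finset.prod_congr rfl fun i _ => ?_
    rw [Real.rpow_def_of_pos (abs_pos.mpr (hf i)), Real.log_abs, mul_comm]
  have ev : Φ =ᶠ[nhds q] fun q =>
      Real.exp (∑ i, lam i * Real.log (eval q (f i)) + eval q g * (eval q h)⁻¹) := by
    have : ∀ᶠ q' in nhds q, ∀ i, eval q' (f i) ≠ 0 :=
      Filter.eventually_all.mpr fun i => (cont (f i)).eventually_ne (hf i)
    filter_upwards [this] with q' h' using key q' h'
  have hinv : HasFDerivAt (fun q => (eval q h)⁻¹) (-(eval q h ^ 2)⁻¹ • Dp h q) q :=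
    (hasDerivAt_inv hh).comp_hasFDerivAt q (hasFDeriv_eval h q)
  have hd : HasFDerivAt (fun q => ∑ i, lam i * Real.log (eval q (f i)) + eval q g * (eval q h)⁻¹)
      (∑ i, lam i • ((eval q (f i))⁻¹ • Dp (f i) q) + (eval q g • (-(eval q h ^ 2)⁻¹ • Dp h q)
        + (eval q h)⁻¹ • Dp g q)) q := by
    refine HasFDerivAt.add (HasFDerivAt.fun_sum fun i _ => ?_) ((hasFDeriv_eval g q).mul hinv)
    exact ((hasFDeriv_eval (f i) q).log (hf i)).const_mul (lam i)
  refine ⟨_, (hd.exp).congr_of_eventuallyEq ev, ?_⟩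
  intro v
  rw [← key q hf]
  simp only [ContinuousLinearMap.smul_apply, ContinuousLinearMap.add_apply,
    ContinuousLinearMap.sum_apply, smul_eq_mul, dPsi]
  congr 2
  · exact Finset.sum_congr rfl fun i _ => by rw [div_eq_inv_mul]
  · field_simp
    ring

end
end GDE

open MvPolynomial

theorem gd_no_darboux_first_integral
    (A C σ Ra : ℝ) (hA : 0 < A) (hC : 0 < C) (hσ : 0 < σ) (hRa : 0 < Ra)
    (p : ℕ) (f : Fin p → MvPolynomial (Fin 3) ℝ) (hf : ∀ i, f i ≠ 0)
    (lam : Fin p → ℝ)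
    (g h : MvPolynomial (Fin 3) ℝ) (hh : h ≠ 0) (hcop : IsRelPrime g h)
    (U : Set (Fin 3 → ℝ))
    (hU : U = {q | (∀ i, MvPolynomial.eval q (f i) ≠ 0) ∧ MvPolynomial.eval q h ≠ 0})
    (Φ : (Fin 3 → ℝ) → ℝ)
    (hΦ : ∀ q, Φ q =
      (∏ i, |MvPolynomial.eval q (f i)| ^ lam i) *
        Real.exp (MvPolynomial.eval q g / MvPolynomial.eval q h))
    (V : (Fin 3 → ℝ) → (Fin 3 → ℝ))
    (hV : ∀ q, V q =
      ![A * q 1 * q 2 + C * q 2 - σ * q 0, -(q 0 * q 2) + Ra - q 1, -q 2 + q 0 * q 1])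
    (hfirstintegral : ∀ q ∈ U, fderiv ℝ Φ q (V q) = 0) :
    IsLocallyConstant (fun q : U => Φ q) := by
  have hΦpos : ∀ q ∈ U, Φ q ≠ 0 := by
    intro q hq
    rw [hU] at hq
    rw [hΦ]
    refine mul_ne_zero (Finset.prod_ne_zero_iff.mpr fun i _ => ?_) (Real.exp_ne_zero _)
    exact (Real.rpow_pos_of_pos (abs_pos.mpr (hq.1 i)) _).ne'
  have hopen : IsOpen U := by
    have cont : ∀ u : GDR, Continuous (fun q => eval q u) := fun u =>
      continuous_iff_continuousAt.mpr fun q => (GDE.hasFDeriv_eval u q).continuousAt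
    have : U = (⋂ i, {q | eval q (f i) ≠ 0}) ∩ {q | eval q h ≠ 0} := by
      rw [hU]; ext q; simp
    rw [this]
    refine IsOpen.inter (isOpen_iInter_of_finite fun i => ?_) ?_
    · exact isOpen_ne_fun (cont _) continuous_const
    · exact isOpen_ne_fun (cont _) continuous_const
  have hgd : ∀ q u, eval q (gdDeriv A C σ Ra u) = GDE.Dp u q (V q) := by
    intro q u
    rw [GDE.Dp_apply, Fin.sum_univ_three, hV]
    simp [gdDeriv]
    ring
  have hNn : GDE.Nn f lam g h (gdDeriv A C σ Ra) = 0 := by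
    have hprod : GDE.Nn f lam g h (gdDeriv A C σ Ra) * ((∏ i, f i) * h) = 0 := by
      apply MvPolynomial.funext
      intro q
      rw [map_zero, map_mul, map_mul, map_prod]
      by_cases hq : q ∈ U
      · have hq' := hq
        rw [hU] at hq'
        obtain ⟨L, hL, hLv⟩ := GDE.hasFDeriv_Phi f lam g h Φ hΦ q hq'.1 hq'.2
        have h0 := hfirstintegral q hq
        rw [hL.fderiv, hLv] at h0
        rw [GDE.eval_Nn f lam g h _ q (V q) (hgd q) hq'.1 hq'.2,
          (mul_eq_zero.mp h0).resolve_left (hΦpos q hq)]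
        ring
      · rw [hU] at hq
        have : (∏ i, eval q (f i)) * eval q h = 0 := by
          by_contra hne
          apply hq
          obtain ⟨h1, h2⟩ := mul_ne_zero_iff.mp hne
          exact ⟨fun i => Finset.prod_ne_zero_iff.mp h1 i (Finset.mem_univ i), h2⟩
        rw [this, mul_zero]
    refine (mul_eq_zero.mp hprod).resolve_right (mul_ne_zero ?_ hh)
    exact Finset.prod_ne_zero_iff.mpr fun i _ => hf i
  have hall := GDE.alg_main f lam g h hf hh A C σ Ra hA hC hσ hRa hNn
  have hder : ∀ q ∈ U, HasFDerivAt Φ (0 : (Fin 3 → ℝ) →L[ℝ] ℝ) q := by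
    intro q hq
    have hq' := hq
    rw [hU] at hq'
    obtain ⟨L, hL, hLv⟩ := GDE.hasFDeriv_Phi f lam g h Φ hΦ q hq'.1 hq'.2
    have hL0 : ∀ j, L (Pi.single j 1) = 0 := by
      intro j
      have h1 := GDE.eval_Nn f lam g h (pderiv j) q (Pi.single j 1)
        (by intro u; rw [GDE.Dp_apply]; simp [Pi.single_apply]) hq'.1 hq'.2
      rw [hall j, map_zero] at h1
      have hne : (∏ i, eval q (f i)) * eval q h ^ 2 ≠ 0 :=
        mul_ne_zero (Finset.prod_ne_zero_iff.mpr fun i _ => hq'.1 i) (pow_ne_zero 2 hq'.2)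
      rw [hLv, (mul_eq_zero.mp h1.symm).resolve_left hne, mul_zero]
    have : L = 0 := by
      refine ContinuousLinearMap.ext fun v => ?_
      rw [pi_eq_sum_univ' v, map_sum]
      refine Finset.sum_eq_zero fun j _ => ?_
      rw [map_smul, hL0, smul_zero]
    rwa [this] at hL
  rw [IsLocallyConstant.iff_eventually_eq]
  rintro ⟨q, hq⟩
  obtain ⟨ε, hε, hball⟩ := Metric.isOpen_iff.mp hopen q hq
  have hn : ∀ᶠ y : U in nhds ⟨q, hq⟩, (y : Fin 3 → ℝ) ∈ Metric.ball q ε :=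
    continuous_subtype_val.continuousAt.eventually (Metric.ball_mem_nhds q hε)
  filter_upwards [hn] with y hy
  exact (convex_ball q ε).is_const_of_fderivWithin_eq_zero (𝕜 := ℝ) (f := Φ)
    (fun y hy => (hder y (hball hy)).differentiableAt.differentiableWithinAt)
    (fun y hy => by
      rw [fderivWithin_of_isOpen Metric.isOpen_ball hy]; exact (hder y (hball hy)).fderiv)
    hy (Metric.mem_ball_self hε)
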